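/- arXiv:2412.20729 — 3 statements merged into one kernel-verified Lean document; each statement's English description precedes it below -/
import Mathlib

section
/- If G is a 2-connected chordal graph with a minimal tree representation T, then lct(G) ≤ 4 · ccg(T). -/
open SimpleGraph

/-- A graph is chordal if every cycle on at least 4 vertices has a chord
(an edge of the graph joining two vertices of the cycle that is not an edge of the cycle). -/
def IsChordal {V : Type} (G : SimpleGraph V) : Prop :=
  ∀ (v : V) (c : G.Walk v v), c.IsCycle → 4 ≤ c.length →
    ∃ a b : V, a ∈ c.support ∧ b ∈ c.support ∧ G.Adj a b ∧ s(a, b) ∉ c.edges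

/-- A tree representation of `G` with host tree `T`: each vertex `u` of `G` gets a
nonempty subtree `S u` of `T`, and distinct vertices are adjacent iff their subtrees meet. -/
structure TreeRep {V W : Type} (G : SimpleGraph V) (T : SimpleGraph W) : Type where
  isTree : T.IsTree
  S : V → Set W
  subtree_connected : ∀ u : V, (T.induce (S u)).Connected
  adj_iff : ∀ u v : V, u ≠ v → (G.Adj u v ↔ (S u ∩ S v).Nonempty)

/-- A tree representation is minimal if no tree representation of `G` has a host tree
with fewer vertices. -/
def TreeRep.IsMinimal {V W : Type} [Fintype W] {G : SimpleGraph V} {T : SimpleGraph W}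
    (_R : TreeRep G T) : Prop :=
  ∀ (W' : Type) [Fintype W'] (T' : SimpleGraph W'),
    Nonempty (TreeRep G T') → Fintype.card W ≤ Fintype.card W'

/-- The bag of a host tree vertex `x`. -/
def TreeRep.bag {V W : Type} {G : SimpleGraph V} {T : SimpleGraph W}
    (R : TreeRep G T) (x : W) : Set V :=
  {u : V | x ∈ R.S u}

/-- In `T` rooted at `r`, the (vertex set of the) subtree rooted at `x`: all vertices `w`
such that the `r`–`w` path contains `x`. -/
def rootedSubtree {W : Type} (T : SimpleGraph W) (r x : W) : Set W :=
  {w : W | ∀ p : T.Walk r w, p.IsPath → x ∈ p.support}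

/-- The core of a subgraph `H` of `G`: the union over edges `uv` of `H` of `V(S u ∩ S v)`,
a set of host-tree vertices. -/
def TreeRep.core {V W : Type} {G : SimpleGraph V} {T : SimpleGraph W}
    (R : TreeRep G T) (H : G.Subgraph) : Set W :=
  {t : W | ∃ u v : V, H.Adj u v ∧ t ∈ R.S u ∧ t ∈ R.S v}

/-- `C` is a connected component of the subgraph of `T` induced on the vertex set `s`. -/
def IsCompOf {W : Type} (T : SimpleGraph W) (s C : Set W) : Prop :=
  C.Nonempty ∧ C ⊆ s ∧ (T.induce C).Connected ∧
    ∀ ⦃a b : W⦄, a ∈ C → b ∈ s → T.Adj a b → b ∈ C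

/-- A graph is 2-connected if it has more than 2 vertices and deleting any one vertex
leaves it connected. -/
def TwoConnected {V : Type} (G : SimpleGraph V) : Prop :=
  2 < Nat.card V ∧ ∀ v : V, (G.induce {v}ᶜ).Connected

/-- `G` is `k`-connected: more than `k` vertices, and deleting fewer than `k` vertices
leaves it connected. -/
def IsKConnectedGraph {V : Type} (G : SimpleGraph V) (k : ℕ) : Prop :=
  k < Nat.card V ∧ ∀ s : Set V, s.Finite → s.ncard < k → (G.induce sᶜ).Connected

/-- The vertex connectivity `κ(G)`: the maximum `k` such that `G` is `k`-connected. -/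
noncomputable def vertexConnectivity {V : Type} (G : SimpleGraph V) : ℕ :=
  sSup {k : ℕ | IsKConnectedGraph G k}

/-- `p` is a path of maximum length in `G`. -/
def IsLongestPath {V : Type} (G : SimpleGraph V) {a b : V} (p : G.Walk a b) : Prop :=
  p.IsPath ∧ ∀ (c d : V) (q : G.Walk c d), q.IsPath → q.length ≤ p.length

/-- `c` is a cycle of maximum length in `G`. -/
def IsLongestCycle {V : Type} (G : SimpleGraph V) {a : V} (c : G.Walk a a) : Prop :=
  c.IsCycle ∧ ∀ (d : V) (q : G.Walk d d), q.IsCycle → q.length ≤ c.length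

/-- The longest path transversal number of `G`: the least size of a set of vertices
meeting every longest path. -/
noncomputable def lpt {V : Type} (G : SimpleGraph V) : ℕ :=
  sInf {k : ℕ | ∃ A : Set V, A.Finite ∧ A.ncard = k ∧
    ∀ (a b : V) (p : G.Walk a b), IsLongestPath G p → ∃ v ∈ A, v ∈ p.support}

/-- The longest cycle transversal number of `G`: the least size of a set of vertices
meeting every longest cycle. -/
noncomputable def lct {V : Type} (G : SimpleGraph V) : ℕ :=
  sInf {k : ℕ | ∃ A : Set V, A.Finite ∧ A.ncard = k ∧
    ∀ (a : V) (c : G.Walk a a), IsLongestCycle G c → ∃ v ∈ A, v ∈ c.support}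

/-- `DQX T q X Q0`: the union, over `y ∈ Q0`, of the component of `X − E(Q)` containing
`y` (all vertices joined to some `y ∈ Q0` by a walk inside `X` avoiding the edges of `q`). -/
def DQX {W : Type} (T : SimpleGraph W) {x z : W} (q : T.Walk x z) (X : Set W)
    (Q0 : Set W) : Set W :=
  {w : W | ∃ y ∈ Q0, ∃ d : (T.deleteEdges {e : Sym2 W | e ∈ q.edges}).Walk y w,
    ∀ a ∈ d.support, a ∈ X}

/-- Cutter can force the Cutter–Chooser game from position `(X, x)` (a subtree `X` of the
host tree, rooted at `x`) to end within `t` rounds: Cutter picks `z ∈ X` and cuts along the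
`x`–`z` path `Q` in `X`; either `X = Q` (game over), or for every component `X'` of
`X − V(Q)` (with its root `x'`, the vertex of `X'` adjacent to `Q`) that Chooser may pick,
Cutter wins within `t - 1` further rounds. -/
def cutterWins {W : Type} (T : SimpleGraph W) : ℕ → Set W → W → Prop
  | 0, _, _ => False
  | t + 1, X, x =>
      ∃ z ∈ X, ∃ p : T.Walk x z, p.IsPath ∧ (∀ w ∈ p.support, w ∈ X) ∧
        (X = {w : W | w ∈ p.support} ∨
          ∀ (X' : Set W) (x' : W), IsCompOf T (X \ {w : W | w ∈ p.support}) X' →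
            x' ∈ X' → (∃ u ∈ p.support, T.Adj u x') → cutterWins T t X' x')

/-- `ccg(X, x)`: the number of rounds of the Cutter–Chooser game on the subtree `X` of the
host tree rooted at `x`, under optimal play. -/
noncomputable def ccgOn {W : Type} (T : SimpleGraph W) (X : Set W) (x : W) : ℕ :=
  sInf {t : ℕ | cutterWins T t X x}

/-- `ccg(T)`: the minimum over roots `r` of `ccg(T, r)`. -/
noncomputable def ccg {W : Type} (T : SimpleGraph W) : ℕ :=
  sInf (Set.range fun r : W => ccgOn T Set.univ r)

/-- A subdivided caterpillar: a tree having a (spine) path containing every vertex of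
degree at least 3. -/
def IsSubdividedCaterpillar {W : Type} (T : SimpleGraph W) : Prop :=
  T.IsTree ∧ ∃ (a b : W) (q : T.Walk a b), q.IsPath ∧
    ∀ v : W, 3 ≤ (T.neighborSet v).ncard → v ∈ q.support

/-- A subdivided star: a tree with at most one vertex of degree at least 3. -/
def IsSubdividedStar {W : Type} (T : SimpleGraph W) : Prop :=
  T.IsTree ∧ ∀ v w : W, 3 ≤ (T.neighborSet v).ncard → 3 ≤ (T.neighborSet w).ncard → v = w

/-- A leaf: a vertex of degree 1. -/
def IsLeaf {W : Type} (T : SimpleGraph W) (v : W) : Prop := (T.neighborSet v).ncard = 1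

/-- `mf T`: the maximum over edges `e` of `T` of the minimum number of leaves of `T`
contained in a component of `T − e`. -/
noncomputable def mf {W : Type} (T : SimpleGraph W) : ℕ :=
  sSup {k : ℕ | ∃ u v : W, T.Adj u v ∧
    k = min {w : W | IsLeaf T w ∧ (T.deleteEdges {s(u, v)}).Reachable u w}.ncard
            {w : W | IsLeaf T w ∧ (T.deleteEdges {s(u, v)}).Reachable v w}.ncard}

/-- In `T` rooted at `r`, `v` is a child of `u`. -/
def IsChildIn {W : Type} (T : SimpleGraph W) (r u v : W) : Prop :=
  T.Adj u v ∧ ∀ p : T.Walk r v, p.IsPath → u ∈ p.support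

/-- In `T` rooted at `r`, `u` is childless. -/
def IsChildlessIn {W : Type} (T : SimpleGraph W) (r u : W) : Prop :=
  ¬ ∃ v : W, IsChildIn T r u v

/-!
The core of a cycle, the set of tree vertices lying in the subtrees of two consecutive vertices of
the cycle, records where the cycle lives in the tree. Suppose that the cores of a family of longest
cycles all meet the current subtree `X`, and that Cutter cuts `X` along the path `q`. There are at
most four vertices such that the members of the family avoiding them all have a core meeting one
and the same component of `X − q`. If Chooser selects that component, the next rounds dispose of
these cycles, so four vertices per round suffice.

Two longest cycles of a 2-connected graph share at least two vertices. Hence, if some longest cycle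
enters a component `E` but has at most one vertex in the bag of the path vertex to which `E` is
attached, then every core meets `E`. Otherwise choose a shortest segment of `q` such that every
cycle of the family has a core vertex on the segment or in a component attached to it. Minimality
yields two vertices `y`, `z` of `G` whose subtrees contain the whole segment. A cycle missing `y`
contains an ear: an arc between two vertices of a bag of the segment running through one attached
component. Let `f` be a longest ear, with ends `u` and `v`. A longest cycle avoiding `u`, `v`, `y`
and `z` must meet the interior of `f`, for otherwise replacing its own ear by `f`, reached through
`y` and `z`, would lengthen it; so its core meets the component of `f`.
-/

section Walks

/-- `p` is an `A`–`B` path: it starts in `A`, ends in `B`, and meets `A` and `B` nowhere else. -/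
structure IsPathBetween {V : Type*} {G : SimpleGraph V} {a b : V} (A B : Set V)
    (p : G.Walk a b) : Prop where
  isPath : p.IsPath
  start_mem : a ∈ A
  end_mem : b ∈ B
  eq_start : ∀ x ∈ p.support, x ∈ A → x = a
  eq_end : ∀ x ∈ p.support, x ∈ B → x = b

variable {V : Type*} {G : SimpleGraph V} {a b u v w x y : V} {A B M : Set V}

theorem exists_append_first_mem (p : G.Walk u v) (hv : v ∈ M) :
    ∃ w ∈ M, ∃ (q : G.Walk u w) (r : G.Walk w v),
      p = q.append r ∧ ∀ x ∈ q.support, x ∈ M → x = w := by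
  induction p with
  | nil => exact ⟨_, hv, .nil, .nil, rfl, by simp⟩
  | @cons u _ _ hadj p ih =>
    by_cases hu : u ∈ M
    · exact ⟨u, hu, .nil, .cons hadj p, rfl, by simp⟩
    · obtain ⟨w, hw, q, r, rfl, hq⟩ := ih hv
      refine ⟨w, hw, .cons hadj q, r, rfl, fun x hx hxM => ?_⟩
      rcases List.mem_cons.1 hx with rfl | hx
      · exact absurd hxM hu
      · exact hq x hx hxM

theorem exists_isPathBetween (p : G.Walk u v) (hu : u ∈ A) (hv : v ∈ B) :
    ∃ (a b : V) (q : G.Walk a b), IsPathBetween A B q ∧ q.support ⊆ p.support := by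
  classical
  obtain ⟨b, hb, q₁, r₁, rfl, hq₁⟩ := exists_append_first_mem p hv
  obtain ⟨a, ha, q₂, r₂, hq, hq₂⟩ := exists_append_first_mem q₁.reverse hu
  have hsub₂ : ∀ x ∈ q₂.reverse.bypass.support, x ∈ q₂.support := fun x hx => by
    simpa using Walk.support_bypass_subset_support _ hx
  have hsub₁ : ∀ x ∈ q₂.support, x ∈ q₁.support := fun x hx => by
    rw [← List.mem_reverse, ← Walk.support_reverse, hq]
    exact Walk.support_subset_support_append_left _ _ hx
  exact ⟨a, b, q₂.reverse.bypass,
    ⟨Walk.bypass_isPath _, ha, hb, fun x hx => hq₂ x (hsub₂ x hx),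
      fun x hx => hq₁ x (hsub₁ x (hsub₂ x hx))⟩,
    fun x hx => Walk.support_subset_support_append_left _ _ (hsub₁ x (hsub₂ x hx))⟩

theorem start_notMem_tail_support {p : G.Walk u v} (hp : p.IsPath) : u ∉ p.support.tail := by
  have := hp.support_nodup
  rw [← p.cons_tail_support, List.nodup_cons] at this
  exact this.1

theorem isPath_append {p : G.Walk u v} {q : G.Walk v w} (hp : p.IsPath) (hq : q.IsPath)
    (hpq : ∀ x ∈ p.support, x ∈ q.support → x = v) : (p.append q).IsPath := by
  rw [Walk.isPath_def, Walk.support_append, List.nodup_append']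
  refine ⟨hp.support_nodup, hq.support_nodup.tail, fun x hxp hxq => ?_⟩
  obtain rfl := hpq x hxp (List.mem_of_mem_tail hxq)
  exact start_notMem_tail_support hq hxq

theorem connected_induce_interior {p : G.Walk a b} (hp : p.IsPath) (hx : x ∈ p.support)
    (hxa : x ≠ a) (hxb : x ≠ b) :
    (G.induce {x | x ∈ p.support ∧ x ≠ a ∧ x ≠ b}).Connected := by
  cases p with
  | nil => exact absurd (by simpa using hx) hxa
  | cons hadj p =>
    obtain ⟨hp, ha⟩ := (Walk.cons_isPath_iff _ _).1 hp
    have hxp : x ∈ p.support := by simpa [hxa] using hx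
    rw [← Walk.isPath_reverse_iff] at hp
    rw [← List.mem_reverse, ← Walk.support_reverse] at hxp ha
    generalize hr : p.reverse = r at hp hxp ha
    cases r with
    | nil => exact absurd (by simpa using hxp) hxb
    | cons hadj' r =>
      have hb := ((Walk.cons_isPath_iff _ _).1 hp).2
      have hp_mem : ∀ z, z ∈ p.support ↔ z = b ∨ z ∈ r.support := fun z => by
        rw [← List.mem_reverse, ← Walk.support_reverse, hr, Walk.support_cons, List.mem_cons]
      have hinterior : {z | z ∈ (Walk.cons hadj p).support ∧ z ≠ a ∧ z ≠ b} =
          {z | z ∈ r.support} := by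
        ext z
        simp only [Walk.support_cons, List.mem_cons, Set.mem_ofPred_eq, hp_mem] at ha ⊢
        grind
      exact hinterior ▸ r.connected_induce_support

theorem exists_isPath_extending {f : G.Walk u v} (hf : f.IsPath)
    (hy : y = u ∨ y ∉ f.support ∧ G.Adj y u) :
    ∃ f' : G.Walk y v, f'.IsPath ∧ f.length ≤ f'.length ∧
      ∀ x ∈ f'.support, x = y ∨ x ∈ f.support := by
  rcases hy with rfl | ⟨hy, hadj⟩
  · exact ⟨f, hf, le_rfl, fun _ => .inr⟩
  · exact ⟨.cons hadj f, hf.cons hy, by simp, by simp⟩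

end Walks

section Cycles

/-- A cycle of `G`, regarded as a subgraph: this forgets the base point and the orientation which
a closed walk carries. -/
def IsCycleSubgraph {V : Type*} {G : SimpleGraph V} (H : G.Subgraph) : Prop :=
  ∃ (v : V) (c : G.Walk v v), c.IsCycle ∧ c.toSubgraph = H

/-- The cycle subgraph `H` consists of the two arcs `p` and `q` joining the distinct vertices `a`
and `b`; the arcs are oriented so that `p.append q` runs around `H`. -/
structure IsArcPair {V : Type*} {G : SimpleGraph V} {a b : V} (H : G.Subgraph) (p : G.Walk a b)
    (q : G.Walk b a) : Prop where
  ne : a ≠ b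
  isPath_left : p.IsPath
  isPath_right : q.IsPath
  inter : ∀ x ∈ p.support, x ∈ q.support → x = a ∨ x = b
  three_le : 3 ≤ p.length + q.length
  sup_eq : p.toSubgraph ⊔ q.toSubgraph = H

/-- The cycle subgraph `H` has the maximum number of vertices among all cycles of `G`. -/
def IsLongestCycleSubgraph {V : Type*} {G : SimpleGraph V} (H : G.Subgraph) : Prop :=
  IsCycleSubgraph H ∧ ∀ H' : G.Subgraph, IsCycleSubgraph H' → H'.verts.ncard ≤ H.verts.ncard

variable {V : Type*} {G : SimpleGraph V} {H : G.Subgraph} {a b u v x : V}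

theorem ncard_verts_toSubgraph {c : G.Walk v v} (hc : c.IsCycle) :
    c.toSubgraph.verts.ncard = c.length := by
  classical
  have hverts : c.toSubgraph.verts = c.support.tail.toFinset := by
    ext x
    rw [Walk.mem_verts_toSubgraph, List.coe_toFinset, Set.mem_ofPred_eq]
    refine ⟨fun h => ?_, List.mem_of_mem_tail⟩
    rcases c.mem_support_iff.1 h with rfl | h
    · exact c.end_mem_tail_support hc.not_nil
    · exact h
  rw [hverts, Set.ncard_coe_finset, List.toFinset_card_of_nodup hc.support_nodup]
  simp

namespace IsArcPair

variable {p : G.Walk a b} {q : G.Walk b a}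

theorem symm (h : IsArcPair H p q) : IsArcPair H q p where
  ne := h.ne.symm
  isPath_left := h.isPath_right
  isPath_right := h.isPath_left
  inter x hq hp := (h.inter x hp hq).symm
  three_le := by have := h.three_le; omega
  sup_eq := sup_comm q.toSubgraph _ ▸ h.sup_eq

theorem reverse (h : IsArcPair H p q) : IsArcPair H p.reverse q.reverse where
  ne := h.ne.symm
  isPath_left := h.isPath_left.reverse
  isPath_right := h.isPath_right.reverse
  inter x hp hq := (h.inter x (by simpa using hp) (by simpa using hq)).symm
  three_le := by simpa using h.three_le
  sup_eq := by simpa using h.sup_eq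

theorem mem_verts (h : IsArcPair H p q) {x : V} :
    x ∈ H.verts ↔ x ∈ p.support ∨ x ∈ q.support := by
  simp [← h.sup_eq]

theorem adj (h : IsArcPair H p q) {x y : V} :
    H.Adj x y ↔ p.toSubgraph.Adj x y ∨ q.toSubgraph.Adj x y := by
  simp [← h.sup_eq]

theorem isCycle_append (h : IsArcPair H p q) : (p.append q).IsCycle := by
  have hlen := h.three_le
  refine h.isPath_left.isCycle_append h.isPath_right (fun x hxp hxq => ?_) (by omega)
  rcases h.inter x (List.mem_of_mem_tail hxp) (List.mem_of_mem_tail hxq) with rfl | rfl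
  · exact start_notMem_tail_support h.isPath_left hxp
  · exact start_notMem_tail_support h.isPath_right hxq

theorem isCycleSubgraph (h : IsArcPair H p q) : IsCycleSubgraph H :=
  ⟨a, _, h.isCycle_append, by rw [Walk.toSubgraph_append, h.sup_eq]⟩

theorem ncard_verts (h : IsArcPair H p q) : H.verts.ncard = p.length + q.length := by
  rw [← h.sup_eq, ← Walk.toSubgraph_append, ncard_verts_toSubgraph h.isCycle_append,
    Walk.length_append]

theorem of_isCycle_append (hab : a ≠ b) (hc : (p.append q).IsCycle) :
    IsArcPair (p.append q).toSubgraph p q where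
  ne := hab
  isPath_left := hc.isPath_of_append_left (Walk.not_nil_of_ne hab.symm)
  isPath_right := hc.isPath_of_append_right (Walk.not_nil_of_ne hab)
  inter x hp hq := by
    have hnodup := hc.support_nodup
    rw [Walk.tail_support_append, List.nodup_append'] at hnodup
    by_contra! hx
    exact hnodup.2.2 (p.mem_support_iff.1 hp |>.resolve_left hx.1)
      (q.mem_support_iff.1 hq |>.resolve_left hx.2)
  three_le := by simpa using hc.three_le_length
  sup_eq := (p.toSubgraph_append q).symm

theorem length_le_of_longest (h : IsArcPair H p q) (hH : IsLongestCycleSubgraph H)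
    {r : G.Walk a b} (hr : r.IsPath) (hrq : ∀ x ∈ r.support, x ∈ q.support → x = a ∨ x = b) :
    r.length ≤ p.length := by
  by_contra! hlt
  have hsplice : IsArcPair (r.toSubgraph ⊔ q.toSubgraph) r q :=
    ⟨h.ne, hr, h.isPath_right, hrq, by have := h.three_le; omega, rfl⟩
  have := hH.2 _ hsplice.isCycleSubgraph
  rw [hsplice.ncard_verts, h.ncard_verts] at this
  omega

end IsArcPair

theorem IsLongestCycle.isLongestCycleSubgraph {V : Type} {G : SimpleGraph V} {a : V}
    {c : G.Walk a a} (hc : IsLongestCycle G c) : IsLongestCycleSubgraph c.toSubgraph := by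
  refine ⟨⟨a, c, hc.1, rfl⟩, ?_⟩
  rintro _ ⟨d, q, hq, rfl⟩
  rw [ncard_verts_toSubgraph hq, ncard_verts_toSubgraph hc.1]
  exact hc.2 d q hq

namespace IsCycleSubgraph

theorem exists_adj (hH : IsCycleSubgraph H) (hv : v ∈ H.verts) : ∃ w, H.Adj v w := by
  obtain ⟨u, c, hc, rfl⟩ := hH
  have := hc.ncard_neighborSet_toSubgraph_eq_two ((Walk.mem_verts_toSubgraph _).1 hv)
  exact Set.nonempty_of_ncard_ne_zero (s := c.toSubgraph.neighborSet v) (by omega)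

theorem nonempty_verts (hH : IsCycleSubgraph H) : H.verts.Nonempty := by
  obtain ⟨v, c, -, rfl⟩ := hH
  exact ⟨v, c.start_mem_verts_toSubgraph⟩

theorem exists_isArcPair (hH : IsCycleSubgraph H) (ha : a ∈ H.verts) (hb : b ∈ H.verts)
    (hab : a ≠ b) : ∃ (p : G.Walk a b) (q : G.Walk b a), IsArcPair H p q := by
  classical
  obtain ⟨v, c, hc, rfl⟩ := hH
  rw [Walk.mem_verts_toSubgraph] at ha hb
  have hb' : b ∈ (c.rotate a ha).support := by
    rw [← Walk.mem_verts_toSubgraph, Walk.toSubgraph_rotate, Walk.mem_verts_toSubgraph]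
    exact hb
  have hrot := hc.rotate ha
  rw [← Walk.take_spec _ hb'] at hrot
  have := IsArcPair.of_isCycle_append hab hrot
  rw [Walk.take_spec, Walk.toSubgraph_rotate] at this
  exact ⟨_, _, this⟩

/-- One of the two arcs between a starting vertex and any other vertex outside `Y` avoids `Y`. -/
theorem induction_of_inter_subsingleton (hH : IsCycleSubgraph H) {Y : Set V}
    (hY : (H.verts ∩ Y).Subsingleton) {P : V → Prop}
    (hstep : ∀ ⦃x y⦄, H.Adj x y → x ∉ Y → P x → P y)
    (hu : u ∈ H.verts) (huP : P u) (hv : v ∈ H.verts) (hvY : v ∉ Y) (huY : u ∉ Y) : P v := by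
  have along : ∀ {s t : V} (p : G.Walk s t), p.toSubgraph ≤ H → (∀ x ∈ p.support, x ∉ Y) →
      P s → P t := by
    intro s t p
    induction p with
    | nil => exact fun _ _ h => h
    | cons hadj p ih =>
      intro hle hav hs
      rw [Walk.toSubgraph, sup_le_iff] at hle
      exact ih hle.2 (fun x hx => hav x (List.mem_cons_of_mem _ hx))
        (hstep (hle.1.2 (by simp)) (hav _ (by simp)) hs)
  rcases eq_or_ne u v with rfl | huv
  · exact huP
  obtain ⟨p, q, hpq⟩ := hH.exists_isArcPair hu hv huv
  by_cases hp : ∀ x ∈ p.support, x ∉ Y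
  · exact along p (hpq.sup_eq ▸ le_sup_left) hp huP
  · push Not at hp
    obtain ⟨y, hyp, hyY⟩ := hp
    refine along q.reverse (by simp [← hpq.sup_eq]) (fun x hx hxY => ?_) huP
    rw [Walk.support_reverse, List.mem_reverse] at hx
    obtain rfl : x = y := hY ⟨hpq.mem_verts.2 (.inr hx), hxY⟩ ⟨hpq.mem_verts.2 (.inl hyp), hyY⟩
    rcases hpq.inter x hyp hx with rfl | rfl
    · exact huY hyY
    · exact hvY hyY

theorem exists_isArcPair_through (hH : IsCycleSubgraph H) {Y : Set V} (hu : u ∈ H.verts)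
    (huY : u ∉ Y) (hY : (H.verts ∩ Y).Nontrivial) :
    ∃ a ∈ Y, ∃ b ∈ Y, ∃ (p : G.Walk a b) (q : G.Walk b a), IsArcPair H p q ∧ u ∈ p.support ∧
      ∀ x ∈ p.support, x ∈ Y → x = a ∨ x = b := by
  obtain ⟨y, ⟨hyH, hyY⟩, z, ⟨hzH, hzY⟩, hyz⟩ := hY
  obtain ⟨p, q, hpq⟩ := hH.exists_isArcPair hu hyH fun h => huY (h ▸ hyY)
  obtain ⟨b, hb, p₁, p₂, rfl, hp₁⟩ := exists_append_first_mem p hyY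
  obtain ⟨a, ha, q₁, q₂, hq, hq₁⟩ := exists_append_first_mem q.reverse hyY
  obtain rfl : q = q₂.reverse.append q₁.reverse := by
    rw [← Walk.reverse_append, ← hq, Walk.reverse_reverse]
  have hab : a ≠ b := by
    rintro rfl
    obtain rfl : a = y := (hpq.inter a (by simp) (by simp)).resolve_left fun h => huY (h ▸ ha)
    obtain rfl := Walk.eq_nil_iff_nil.2 <| Walk.isPath_iff_nil.1 hpq.isPath_left.of_append_right
    obtain rfl := Walk.eq_nil_iff_nil.2 <| Walk.isPath_iff_nil.1 <|
      (Walk.isPath_reverse_iff _).1 hpq.isPath_right.of_append_left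
    rcases hpq.mem_verts.1 hzH with hz | hz
    · exact hyz (hp₁ z (by simpa using hz) hzY).symm
    · exact hyz (hq₁ z (by simpa using hz) hzY).symm
  have hcycle : ((q₁.reverse.append p₁).append (p₂.append q₂.reverse)).IsCycle := by
    have hrotated : ((p₁.append (p₂.append q₂.reverse)).append q₁.reverse).IsCycle := by
      simpa only [Walk.append_assoc] using hpq.isCycle_append
    have hua : u ≠ a := fun h => huY (h ▸ ha)
    simpa only [Walk.append_assoc] using
      (IsArcPair.of_isCycle_append hua hrotated).symm.isCycle_append
  refine ⟨a, ha, b, hb, q₁.reverse.append p₁, p₂.append q₂.reverse, ?_, by simp, ?_⟩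
  · convert IsArcPair.of_isCycle_append hab hcycle using 1
    simp only [← hpq.sup_eq, Walk.toSubgraph_append]
    ac_rfl
  · intro x hx hxY
    rw [Walk.mem_support_append_iff, Walk.support_reverse, List.mem_reverse] at hx
    exact hx.imp (hq₁ x · hxY) (hp₁ x · hxY)

end IsCycleSubgraph

theorem IsArcPair.length_add_two_le {p : G.Walk a b} {q : G.Walk b a}
    (h : IsArcPair H p q) (hH : IsLongestCycleSubgraph H) {f : G.Walk u v} (hf : f.IsPath)
    (hfH : ∀ x ∈ f.support, x ∉ H.verts) (hau : G.Adj a u) (hvb : G.Adj v b) :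
    f.length + 2 ≤ p.length := by
  have hb : b ∉ f.support := fun hb => hfH b hb (h.mem_verts.2 (by simp))
  have ha : a ∉ (f.concat hvb).support := by
    rw [Walk.support_concat, List.mem_append, List.mem_singleton, not_or]
    exact ⟨fun ha => hfH a ha (h.mem_verts.2 (by simp)), h.ne⟩
  have hle := h.length_le_of_longest hH (r := .cons hau (f.concat hvb))
    ((hf.concat hb hvb).cons ha) ?_
  · rwa [Walk.length_cons, Walk.length_concat] at hle
  · intro x hx hxq
    simp only [Walk.support_cons, Walk.support_concat, List.mem_cons,
      List.mem_append, List.not_mem_nil, or_false] at hx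
    have hxf : x ∉ f.support := fun hxf => hfH x hxf (h.mem_verts.2 (.inr hxq))
    tauto

theorem IsLongestCycleSubgraph.mem_verts_of_adj_of_adj (hH : IsLongestCycleSubgraph H)
    (huv : H.Adj u v) (hux : G.Adj u x) (hxv : G.Adj x v) : x ∈ H.verts := by
  by_contra hx
  obtain ⟨p, q, hpq⟩ := hH.1.exists_isArcPair huv.fst_mem huv.snd_mem huv.ne
  have hx' : ∀ z ∈ (Walk.nil : G.Walk x x).support, z ∉ H.verts := by simpa using hx
  have hp := hpq.length_add_two_le hH Walk.IsPath.nil hx' hux hxv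
  have hq := hpq.symm.length_add_two_le hH Walk.IsPath.nil hx' hxv.symm hux.symm
  rcases hpq.adj.1 huv with huv | huv
  · have := hpq.isPath_left.length_eq_one_of_mem_edges
      (Walk.adj_toSubgraph_iff_mem_edges.1 huv)
    omega
  · have := hpq.isPath_right.length_eq_one_of_mem_edges
      (Walk.adj_toSubgraph_iff_mem_edges.1 huv.symm)
    omega

end Cycles

section TwoConnected

/-- Two walks with disjoint supports lead from `u` and from `v` into `K`. In a 2-connected graph
this property passes from edge to edge, which gives the case of Menger's theorem needed here. -/
def HasDisjointWalks {V : Type*} (G : SimpleGraph V) (K : Set V) (u v : V) : Prop :=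
  ∃ k ∈ K, ∃ l ∈ K, ∃ (p : G.Walk u k) (q : G.Walk v l), p.support.Disjoint q.support

variable {V : Type} {G : SimpleGraph V}

theorem TwoConnected.finite (h2 : TwoConnected G) : Finite V :=
  Nat.finite_of_card_ne_zero (by have := h2.1; omega)

theorem TwoConnected.exists_walk_avoiding (h2 : TwoConnected G) {s u v : V} (hu : u ≠ s)
    (hv : v ≠ s) : ∃ p : G.Walk u v, s ∉ p.support := by
  obtain ⟨p⟩ := (h2.2 s).preconnected ⟨u, Set.mem_compl_singleton_iff.2 hu⟩
    ⟨v, Set.mem_compl_singleton_iff.2 hv⟩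
  refine ⟨p.map (Embedding.induce {s}ᶜ).toHom, fun hs => ?_⟩
  obtain ⟨x, -, hx⟩ := List.mem_map.1 (Walk.support_map _ p ▸ hs)
  exact x.2 hx

theorem HasDisjointWalks.step (h2 : TwoConnected G) {K : Set V} {r s t : V}
    (h : HasDisjointWalks G K r s) (hrs : G.Adj r s) (hst : G.Adj s t) :
    HasDisjointWalks G K s t := by
  classical
  obtain ⟨k, hk, l, hl, p, q', hpq'⟩ := h
  obtain ⟨q, hq, hpq⟩ : ∃ q : G.Walk s l, q.IsPath ∧ p.support.Disjoint q.support :=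
    ⟨q'.bypass, q'.bypass_isPath, fun x hxp hxq => hpq' hxp (q'.support_bypass_subset_support hxq)⟩
  obtain ⟨d, hd⟩ := h2.exists_walk_avoiding hst.ne' hrs.ne
  obtain ⟨m, hm, d₁, d₂, rfl, hd₁⟩ := exists_append_first_mem
    (M := {x | x ∈ K ∨ x ∈ p.support ∨ x ∈ q.support ∧ x ≠ s}) d (.inr (.inl p.start_mem_support))
  have hsd₁ : s ∉ d₁.support := fun hs => hd (Walk.support_subset_support_append_left _ _ hs)
  by_cases hmp : m ∈ p.support
  · refine ⟨l, hl, k, hk, q, d₁.append (p.dropUntil m hmp), fun x hxq hx => ?_⟩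
    rcases (Walk.mem_support_append_iff _ _).1 hx with hx | hx
    · have hxs : x ≠ s := fun h => hsd₁ (h ▸ hx)
      exact hpq hmp (hd₁ x hx (.inr (.inr ⟨hxq, hxs⟩)) ▸ hxq)
    · exact hpq (p.support_dropUntil_subset_support _ hx) hxq
  by_cases hmq : m ∈ q.support
  · have hms : m ≠ s := fun h => hsd₁ (h ▸ d₁.end_mem_support)
    refine ⟨k, hk, l, hl, .cons hrs.symm p, d₁.append (q.dropUntil m hmq), fun x hxp hx => ?_⟩
    rcases List.mem_cons.1 hxp with rfl | hxp <;>
      rcases (Walk.mem_support_append_iff _ _).1 hx with hx | hx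
    · exact hsd₁ hx
    · rw [← q.take_spec hmq, Walk.isPath_def, Walk.support_append, List.nodup_append'] at hq
      exact hq.2.2 (Walk.start_mem_support _)
        ((Walk.mem_support_iff _).1 hx |>.resolve_left hms.symm)
    · exact hpq hxp (hd₁ x hx (.inr (.inl hxp)) ▸ hmq)
    · exact hpq hxp (q.support_dropUntil_subset_support _ hx)
  · refine ⟨l, hl, m, hm.resolve_right (by tauto), q, d₁, fun x hxq hx => ?_⟩
    have hxs : x ≠ s := fun h => hsd₁ (h ▸ hx)
    exact hmq (hd₁ x hx (.inr (.inr ⟨hxq, hxs⟩)) ▸ hxq)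

theorem HasDisjointWalks.along_walk (h2 : TwoConnected G) {K : Set V} {r s a b : V}
    (p : G.Walk s a) (h : HasDisjointWalks G K r s) (hrs : G.Adj r s) (hab : G.Adj a b) :
    HasDisjointWalks G K a b := by
  induction p generalizing r with
  | nil => exact h.step h2 hrs hab
  | cons hadj _ ih => exact ih (h.step h2 hrs hadj) hadj hab

theorem TwoConnected.preconnected (h2 : TwoConnected G) : G.Preconnected := by
  intro u v
  obtain ⟨s, hs⟩ : ∃ s, s ∉ ({u, v} : Set V) := by
    by_contra! h
    have hcard := h2.1
    rw [← Set.ncard_univ, ← Set.eq_univ_of_forall h] at hcard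
    exact hcard.not_ge ((Set.ncard_insert_le u {v}).trans (by simp))
  rw [Set.mem_insert_iff, Set.mem_singleton_iff, not_or] at hs
  obtain ⟨p, -⟩ := h2.exists_walk_avoiding (Ne.symm hs.1) (Ne.symm hs.2)
  exact ⟨p⟩

variable {A B : Set V} {a a' b b' : V}

theorem TwoConnected.exists_disjoint_isPathBetween (h2 : TwoConnected G)
    (ha : a ∈ A) (ha' : a' ∈ A) (haa' : G.Adj a a') (hb : b ∈ B) (hb' : b' ∈ B)
    (hbb' : G.Adj b b') (hAB : (A ∩ B).Subsingleton) :
    ∃ (c k : V) (p : G.Walk c k) (c' k' : V) (p' : G.Walk c' k'),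
      IsPathBetween A B p ∧ IsPathBetween A B p' ∧ p.support.Disjoint p'.support ∧
        ∀ x ∈ A, x ∈ B → x ∈ p.support ∨ x ∈ p'.support := by
  by_cases hne : (A ∩ B).Nonempty
  · obtain ⟨y, hyA, hyB⟩ := hne
    obtain ⟨c, hc, hcy⟩ : ∃ c ∈ A, c ≠ y := by
      by_cases h : a = y
      · exact ⟨a', ha', fun h' => haa'.ne (h.trans h'.symm)⟩
      · exact ⟨a, ha, h⟩
    obtain ⟨k, hk, hky⟩ : ∃ k ∈ B, k ≠ y := by
      by_cases h : b = y
      · exact ⟨b', hb', fun h' => hbb'.ne (h.trans h'.symm)⟩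
      · exact ⟨b, hb, h⟩
    obtain ⟨p, hp⟩ := h2.exists_walk_avoiding hcy hky
    obtain ⟨c', k', q, hq, hqp⟩ := exists_isPathBetween p hc hk
    refine ⟨y, y, .nil, c', k', q, ⟨.nil, hyA, hyB, by simp, by simp⟩, hq, ?_, ?_⟩
    · simpa using fun h => hp (hqp h)
    · exact fun x hxA hxB => .inl (by simpa using hAB ⟨hxA, hxB⟩ ⟨hyA, hyB⟩)
  · obtain ⟨q⟩ := h2.preconnected b' a
    have hbase : HasDisjointWalks G B b b' :=
      ⟨b, hb, b', hb', .nil, .nil, by simpa using hbb'.ne'⟩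
    obtain ⟨k, hk, l, hl, p, p', hdisj⟩ := hbase.along_walk h2 q hbb' haa'
    obtain ⟨c₁, k₁, q₁, hq₁, hsub₁⟩ := exists_isPathBetween p ha hk
    obtain ⟨c₂, k₂, q₂, hq₂, hsub₂⟩ := exists_isPathBetween p' ha' hl
    exact ⟨c₁, k₁, q₁, c₂, k₂, q₂, hq₁, hq₂, fun x h₁ h₂ => hdisj (hsub₁ h₁) (hsub₂ h₂),
      fun x hxA hxB => absurd ⟨x, hxA, hxB⟩ hne⟩

/-- The detour along `p`, `γ` and `p'` can replace the arc `α` of `H`. -/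
theorem IsArcPair.length_add_length_add_length_le {H : G.Subgraph} {c c' k k' : V}
    {p : G.Walk c k} {p' : G.Walk c' k'} {γ : G.Walk c c'} {α : G.Walk k k'} {β : G.Walk k' k}
    (hH : IsLongestCycleSubgraph H) (hαβ : IsArcPair H α β) (hp : IsPathBetween A H.verts p)
    (hp' : IsPathBetween A H.verts p') (hdisj : p.support.Disjoint p'.support)
    (hcover : ∀ x ∈ A, x ∈ H.verts → x ∈ p.support ∨ x ∈ p'.support)
    (hγ : γ.IsPath) (hγA : ∀ x ∈ γ.support, x ∈ A) :
    p.length + γ.length + p'.length ≤ α.length := by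
  have hpath : (p.reverse.append (γ.append p')).IsPath := by
    refine isPath_append hp.isPath.reverse (isPath_append hγ hp'.isPath fun x hx hx' =>
      hp'.eq_start x hx' (hγA x hx)) fun x hx hx' => ?_
    rw [Walk.support_reverse, List.mem_reverse] at hx
    rcases (Walk.mem_support_append_iff _ _).1 hx' with hx' | hx'
    · exact hp.eq_start x hx (hγA x hx')
    · exact (hdisj hx hx').elim
  have hlength := hαβ.length_le_of_longest hH hpath fun x hx hxβ => by
    have hxH : x ∈ H.verts := hαβ.mem_verts.2 (.inr hxβ)
    have hx' : x ∈ p.support ∨ x ∈ p'.support := by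
      simp only [Walk.mem_support_append_iff, Walk.support_reverse, List.mem_reverse] at hx
      rcases hx with hx | hx | hx
      · exact .inl hx
      · exact hcover x (hγA x hx) hxH
      · exact .inr hx
    exact hx'.imp (hp.eq_end x · hxH) (hp'.eq_end x · hxH)
  simpa [add_assoc] using hlength

/-- Otherwise two disjoint paths connect `H` to `H'`. Replacing either arc of `H'` between their
ends by a detour through the corresponding arc of `H` yields no longer cycle, so both paths are
trivial. -/
theorem TwoConnected.nontrivial_verts_inter (h2 : TwoConnected G) {H H' : G.Subgraph}
    (hH : IsLongestCycleSubgraph H) (hH' : IsLongestCycleSubgraph H') :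
    (H.verts ∩ H'.verts).Nontrivial := by
  by_contra hAB
  rw [Set.not_nontrivial_iff] at hAB
  obtain ⟨a, ha⟩ := hH.1.nonempty_verts
  obtain ⟨a', haa'⟩ := hH.1.exists_adj ha
  obtain ⟨b, hb⟩ := hH'.1.nonempty_verts
  obtain ⟨b', hbb'⟩ := hH'.1.exists_adj hb
  obtain ⟨c, k, p, c', k', p', hp, hp', hdisj, hcover⟩ := h2.exists_disjoint_isPathBetween
    ha haa'.snd_mem haa'.adj_sub hb hbb'.snd_mem hbb'.adj_sub hAB
  have hcc' : c ≠ c' := fun h => hdisj p.start_mem_support (h ▸ p'.start_mem_support)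
  have hkk' : k ≠ k' := fun h => hdisj p.end_mem_support (h ▸ p'.end_mem_support)
  obtain ⟨γ, δ, hγδ⟩ := hH.1.exists_isArcPair hp.start_mem hp'.start_mem hcc'
  obtain ⟨α, β, hαβ⟩ := hH'.1.exists_isArcPair hp.end_mem hp'.end_mem hkk'
  have hγα := hαβ.length_add_length_add_length_le hH' hp hp' hdisj hcover hγδ.isPath_left
    fun x hx => hγδ.mem_verts.2 (.inl hx)
  have hδβ := hαβ.symm.reverse.length_add_length_add_length_le hH' hp hp' hdisj hcover
    hγδ.isPath_right.reverse fun x hx => hγδ.mem_verts.2 (.inr (by simpa using hx))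
  have hcard : H.verts.ncard = H'.verts.ncard :=
    le_antisymm (hH'.2 H hH.1) (hH.2 H' hH'.1)
  rw [hγδ.ncard_verts, hαβ.ncard_verts] at hcard
  rw [Walk.length_reverse, Walk.length_reverse] at hδβ
  have hck : c = k := Walk.eq_of_length_eq_zero (p := p) (by omega)
  have hck' : c' = k' := Walk.eq_of_length_eq_zero (p := p') (by omega)
  exact hcc' (hAB ⟨hp.start_mem, hck ▸ hp.end_mem⟩ ⟨hp'.start_mem, hck' ▸ hp'.end_mem⟩)

end TwoConnected

section Branches

/-- A vertex set with a single door to the rest of the graph, as seen from inside: only `x` has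
neighbours outside `X`. -/
def IsRootedAt {W : Type*} (T : SimpleGraph W) (X : Set W) (x : W) : Prop :=
  x ∈ X ∧ ∀ ⦃s⦄, s ∈ X → ∀ ⦃t⦄, t ∉ X → T.Adj s t → s = x

/-- A vertex set hanging off the hub `a`, which lies outside `E`: every edge leaving `E` ends
in `a`. -/
def IsBranchAt {W : Type*} (T : SimpleGraph W) (E : Set W) (a : W) : Prop :=
  a ∉ E ∧ ∀ ⦃s⦄, s ∈ E → ∀ ⦃t⦄, t ∉ E → T.Adj s t → t = a

section General

variable {W : Type*} {T : SimpleGraph W} {E S : Set W} {a s t x : W}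

theorem induction_of_connected_induce (hS : (T.induce S).Connected) {P : W → Prop}
    (hstep : ∀ ⦃s⦄, s ∈ S → ∀ ⦃t⦄, t ∈ S → T.Adj s t → P s → P t) (hs : s ∈ S) (hsP : P s)
    (ht : t ∈ S) : P t := by
  obtain ⟨p⟩ := hS.preconnected ⟨s, hs⟩ ⟨t, ht⟩
  by_contra htP
  obtain ⟨d, -, hd, hd'⟩ := p.exists_boundary_dart {r | P r} hsP htP
  exact hd' (hstep d.fst.2 d.snd.2 d.adj hd)

theorem IsBranchAt.subset_of_connected (h : IsBranchAt T E a) (hS : (T.induce S).Connected)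
    (ha : a ∉ S) (hs : s ∈ S) (hsE : s ∈ E) : S ⊆ E := by
  refine fun t ht => induction_of_connected_induce hS (P := (· ∈ E)) ?_ hs hsE ht
  intro s _ t ht hst hsE
  by_contra htE
  exact ha (h.2 hsE htE hst ▸ ht)

theorem IsBranchAt.exists_adj (hT : T.Preconnected) (h : IsBranchAt T E a) (hE : E.Nonempty) :
    ∃ x ∈ E, T.Adj a x := by
  obtain ⟨t, ht⟩ := hE
  obtain ⟨p⟩ := hT t a
  obtain ⟨d, -, hd, hd'⟩ := p.exists_boundary_dart E ht h.1
  exact ⟨d.fst, hd, h.2 hd hd' d.adj ▸ d.adj.symm⟩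

theorem eq_of_adj_of_connected_induce (hT : T.IsAcyclic) (hE : (T.induce E).Connected)
    (ha : a ∉ E) (hs : s ∈ E) (has : T.Adj a s) (ht : t ∈ E) (hat : T.Adj a t) : s = t := by
  by_contra hst
  obtain ⟨p, hp⟩ := hE.exists_isPath ⟨s, hs⟩ ⟨t, ht⟩
  have hpE : (p.map (Embedding.induce E).toHom).IsPath :=
    hp.map (Embedding.induce (G := T) E).injective
  have hpa : (Walk.cons has.symm (.cons hat .nil)).IsPath := by
    simp [Walk.cons_isPath_iff, has.ne', hat.ne, hst]
  have heq : p.map (Embedding.induce E).toHom = .cons has.symm (.cons hat .nil) :=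
    congrArg Subtype.val ((hT.subsingleton_path s t).elim ⟨_, hpE⟩ ⟨_, hpa⟩)
  have hmem : a ∈ (p.map (Embedding.induce E).toHom).support := by
    rw [heq]
    simp
  obtain ⟨x, -, hx⟩ := List.mem_map.1 (Walk.support_map _ p ▸ hmem)
  exact ha (hx ▸ x.2)

theorem IsBranchAt.isRootedAt (hT : T.IsAcyclic) (h : IsBranchAt T E a)
    (hE : (T.induce E).Connected) (hx : x ∈ E) (hax : T.Adj a x) : IsRootedAt T E x := by
  refine ⟨hx, fun s hs t ht hst => ?_⟩
  obtain rfl := h.2 hs ht hst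
  exact eq_of_adj_of_connected_induce hT hE h.1 hs hst.symm hx hax

end General

variable {W : Type} {T : SimpleGraph W} {X E S : Set W} {t x : W}

theorem exists_isCompOf (T : SimpleGraph W) (ht : t ∈ S) : ∃ E, IsCompOf T S E ∧ t ∈ E := by
  classical
  have hnil : ∃ p : T.Walk t t, ∀ a ∈ p.support, a ∈ S := ⟨.nil, by simpa using ht⟩
  refine ⟨{w | ∃ p : T.Walk t w, ∀ a ∈ p.support, a ∈ S}, ⟨⟨t, hnil⟩, ?_, ?_, ?_⟩, hnil⟩
  · rintro w ⟨p, hp⟩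
    exact hp w p.end_mem_support
  · refine induce_connected_of_patches t hnil ?_
    rintro w ⟨p, hp⟩
    refine ⟨{v | v ∈ p.support}, fun v hv => ?_, p.start_mem_support, p.end_mem_support,
      p.connected_induce_support.preconnected _ _⟩
    exact ⟨p.takeUntil v hv, fun a ha => hp a (p.support_takeUntil_subset_support hv ha)⟩
  · rintro a b ⟨p, hp⟩ hb hadj
    refine ⟨p.concat hadj, fun c hc => ?_⟩
    rw [Walk.support_concat, List.mem_append, List.mem_singleton] at hc
    rcases hc with hc | rfl
    · exact hp c hc
    · exact hb

theorem IsCompOf.subset_of_connected {C : Set W} (hE : IsCompOf T S E)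
    (hC : (T.induce C).Connected) (hCS : C ⊆ S) (ht : t ∈ C) (htE : t ∈ E) : C ⊆ E :=
  fun _ hs => induction_of_connected_induce hC (P := (· ∈ E))
    (fun _ _ _ hb hadj ha => hE.2.2.2 ha (hCS hb) hadj) ht htE hs

theorem IsCompOf.isBranchAt_of_isRootedAt (hX : IsRootedAt T X x)
    (hE : IsCompOf T (X \ {x}) E) : IsBranchAt T E x := by
  obtain ⟨-, hEX, -, hclosed⟩ := hE
  refine ⟨fun hx => (hEX hx).2 rfl, fun s hs t ht hst => ?_⟩
  by_contra htx
  by_cases htX : t ∈ X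
  · exact ht (hclosed hs ⟨htX, htx⟩ hst)
  · exact (hEX hs).2 (hX.2 (hEX hs).1 htX hst)

end Branches

section Levels

/-- The levels of a tree `T` along a path `D` inside the subtree `X`: level `0` lies outside `X`,
the path visits `q 1, q 2, …`, and `lev t = j` if `q j` is the path vertex closest to `t ∈ X`.
Levels change only along the edges of the path and the edge by which `X` hangs off the rest. -/
structure IsLevelFunction {W : Type*} (T : SimpleGraph W) (X D : Set W) (q : ℕ → W)
    (lev : W → ℕ) : Prop where
  pos_iff : ∀ t, 0 < lev t ↔ t ∈ X
  spine_mem : ∀ t ∈ X, q (lev t) ∈ D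
  eq_spine : ∀ t ∈ D, t = q (lev t)
  of_adj : ∀ ⦃s t⦄, T.Adj s t → lev s < lev t →
    lev t = lev s + 1 ∧ t = q (lev t) ∧ (0 < lev s → s = q (lev s))

namespace IsLevelFunction

section General

variable {W : Type*} {T : SimpleGraph W} {X D S : Set W} {q : ℕ → W} {lev : W → ℕ} {s t x : W}

theorem spine_mem_of_connected (h : IsLevelFunction T X D q lev) (hS : (T.induce S).Connected)
    {j : ℕ} (hs : s ∈ S) (ht : t ∈ S) (hlt : lev s < lev t) (hj : 0 < j) (hsj : lev s ≤ j)
    (hjt : j ≤ lev t) : q j ∈ S := by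
  by_contra hq
  rcases hsj.eq_or_lt with rfl | hsj
  · refine hlt.not_ge <|
      induction_of_connected_induce hS (P := fun r => lev r ≤ lev s) ?_ hs le_rfl ht
    intro a ha b _ hab hle
    by_contra! hlt'
    obtain ⟨hb, -, ha'⟩ := h.of_adj hab (by omega)
    have has : lev a = lev s := by omega
    exact hq (has ▸ ha' (by omega) ▸ ha)
  · refine hjt.not_gt <|
      induction_of_connected_induce hS (P := fun r => lev r < j) ?_ hs hsj ht
    intro a _ b hb hab hlt'
    by_contra! hle
    obtain ⟨hb', hbq, -⟩ := h.of_adj hab (by omega)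
    have hbj : lev b = j := by omega
    exact hq (hbj ▸ hbq ▸ hb)

theorem of_nil (hX : IsRootedAt T X x) [DecidablePred (· ∈ X)] :
    IsLevelFunction T X {x} (fun _ => x) (fun t => if t ∈ X then 1 else 0) where
  pos_iff t := by split_ifs with ht <;> simp [ht]
  spine_mem _ _ := rfl
  eq_spine _ ht := ht
  of_adj s t hst hlt := by
    by_cases hs : s ∈ X <;> by_cases ht : t ∈ X <;> simp only [hs, ht, if_true, if_false] at hlt ⊢
    any_goals omega
    exact ⟨trivial, hX.2 ht hs hst.symm, fun h => absurd h (lt_irrefl 0)⟩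

theorem cons {X' D' : Set W} {q' : ℕ → W} {lev' : W → ℕ} (h : IsLevelFunction T X' D' q' lev')
    (hX : IsRootedAt T X x) (hX' : IsBranchAt T X' x) (hsub : X' ⊆ X) (hDX : D' ⊆ X')
    [DecidablePred (· ∈ X)] :
    IsLevelFunction T X (insert x D') (fun j => if j ≤ 1 then x else q' (j - 1))
      (fun t => if t ∈ X then lev' t + 1 else 0) where
  pos_iff t := by split_ifs with ht <;> simp [ht]
  spine_mem t ht := by
    by_cases hpos : 0 < lev' t
    · simp [ht, hpos.ne', h.spine_mem t ((h.pos_iff t).1 hpos)]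
    · simp [ht, Nat.eq_zero_of_not_pos hpos]
  eq_spine t ht := by
    have hx : lev' x = 0 := Nat.eq_zero_of_not_pos fun hpos => hX'.1 ((h.pos_iff x).1 hpos)
    rcases ht with rfl | ht
    · simp [hX.1, hx]
    · have hpos := (h.pos_iff t).2 (hDX ht)
      simpa [hsub (hDX ht), hpos.ne'] using h.eq_spine t ht
  of_adj s t hst hlt := by
    have hx : lev' x = 0 := Nat.eq_zero_of_not_pos fun hpos => hX'.1 ((h.pos_iff x).1 hpos)
    by_cases ht : t ∈ X
    · by_cases hs : s ∈ X
      · simp only [hs, ht, if_true, add_lt_add_iff_right] at hlt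
        obtain ⟨hlev, htq, hsq⟩ := h.of_adj hst hlt
        have htX' : t ∈ X' := (h.pos_iff t).1 (by omega)
        refine ⟨by simp [hs, ht, hlev], by simpa [ht, show lev' t ≠ 0 by omega] using htq, ?_⟩
        by_cases hpos : 0 < lev' s
        · simpa [hs, hpos.ne'] using hsq hpos
        · have hsX' : s ∉ X' := fun hsX' => hpos ((h.pos_iff s).2 hsX')
          obtain rfl := hX'.2 htX' hsX' hst.symm
          simp [hs, hx]
      · obtain rfl := hX.2 ht hs hst.symm
        simp [hs, ht, hx]
    · simp [ht] at hlt

end General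

variable {W : Type} {T : SimpleGraph W} {X D E : Set W} {q : ℕ → W} {lev : W → ℕ} {t x z : W}

theorem ne_spine_of_isCompOf (h : IsLevelFunction T X D q lev) (hE : IsCompOf T (X \ D) E)
    (ht : t ∈ E) : t ≠ q (lev t) :=
  fun heq => (hE.2.1 ht).2 (heq ▸ h.spine_mem t (hE.2.1 ht).1)

theorem lev_eq_of_adj_of_isCompOf (h : IsLevelFunction T X D q lev)
    (hE : IsCompOf T (X \ D) E) {s : W} (hs : s ∈ E) (hst : T.Adj s t) : lev s = lev t := by
  have hpos : 0 < lev s := (h.pos_iff s).2 (hE.2.1 hs).1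
  rcases lt_trichotomy (lev s) (lev t) with hlt | heq | hlt
  · exact absurd ((h.of_adj hst hlt).2.2 hpos) (h.ne_spine_of_isCompOf hE hs)
  · exact heq
  · exact absurd (h.of_adj hst.symm hlt).2.1 (h.ne_spine_of_isCompOf hE hs)

theorem isBranchAt_of_isCompOf (h : IsLevelFunction T X D q lev) (hE : IsCompOf T (X \ D) E)
    (ht : t ∈ E) : IsBranchAt T E (q (lev t)) := by
  have hconst : ∀ s ∈ E, lev s = lev t := fun s hs =>
    induction_of_connected_induce hE.2.2.1 (P := fun r => lev r = lev t)
      (fun a ha b _ hab hat => (h.lev_eq_of_adj_of_isCompOf hE ha hab).symm.trans hat) ht rfl hs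
  refine ⟨fun hq => (hE.2.1 hq).2 (h.spine_mem t (hE.2.1 ht).1), fun s hs r hr hsr => ?_⟩
  have hlev := h.lev_eq_of_adj_of_isCompOf hE hs hsr
  have hrX : r ∈ X := (h.pos_iff r).1 (hlev ▸ (h.pos_iff s).2 (hE.2.1 hs).1)
  have hrD : r ∈ D := by
    by_contra hrD
    exact hr (hE.2.2.2 hs ⟨hrX, hrD⟩ hsr)
  rw [← hconst s hs, hlev]
  exact h.eq_spine r hrD

theorem exists_of_isPath (hT : T.IsAcyclic) (hX : IsRootedAt T X x) (p : T.Walk x z)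
    (hp : p.IsPath) (hpX : ∀ w ∈ p.support, w ∈ X) :
    ∃ q lev, IsLevelFunction T X {w | w ∈ p.support} q lev := by
  classical
  induction p generalizing X with
  | nil => exact ⟨_, _, by simpa using of_nil hX⟩
  | @cons x x' _ hadj p ih =>
    obtain ⟨hp, hx⟩ := (Walk.cons_isPath_iff _ _).1 hp
    have hpX' : ∀ w ∈ p.support, w ∈ X \ {x} := fun w hw =>
      ⟨hpX w (List.mem_cons_of_mem _ hw), fun h => hx (h ▸ hw)⟩
    obtain ⟨X', hX', hx'⟩ := exists_isCompOf T (hpX' x' p.start_mem_support)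
    have hbranch := hX'.isBranchAt_of_isRootedAt hX
    have hpsub : {w | w ∈ p.support} ⊆ X' :=
      hX'.subset_of_connected p.connected_induce_support hpX' p.start_mem_support hx'
    obtain ⟨q, lev, hlev⟩ := ih (hbranch.isRootedAt hT hX'.2.2.1 hx' hadj) hp hpsub
    have hsupport : {w | w ∈ (Walk.cons hadj p).support} = insert x {w | w ∈ p.support} := by
      ext w
      simp
    rw [hsupport]
    exact ⟨_, _, hlev.cons hX hbranch (hX'.2.1.trans Set.sdiff_subset) hpsub⟩

end IsLevelFunction

end Levels

section TreeRepresentations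

variable {V W : Type} {G : SimpleGraph V} {T : SimpleGraph W} {H H' : G.Subgraph} {u v : V}
  {c t : W} {E : Set W}

namespace TreeRep

/-- The vertices of `G` whose subtrees meet both `A` and `B`; a cycle whose core lies in `A ∪ B` and
meets both sides has to pass through them. -/
def linking (R : TreeRep G T) (A B : Set W) : Set V :=
  {v | (R.S v ∩ A).Nonempty ∧ (R.S v ∩ B).Nonempty}

variable (R : TreeRep G T)

theorem adj_of_mem_bag (huv : u ≠ v) (hu : u ∈ R.bag t) (hv : v ∈ R.bag t) : G.Adj u v :=
  (R.adj_iff u v huv).2 ⟨t, hu, hv⟩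

theorem exists_mem_core_of_adj (huv : H.Adj u v) : ∃ t ∈ R.core H, t ∈ R.S u ∧ t ∈ R.S v := by
  obtain ⟨t, hu, hv⟩ := (R.adj_iff u v huv.ne).1 huv.adj_sub
  exact ⟨t, ⟨u, v, huv, hu, hv⟩, hu, hv⟩

theorem exists_mem_core (hH : IsCycleSubgraph H) (hv : v ∈ H.verts) :
    ∃ t ∈ R.core H, t ∈ R.S v := by
  obtain ⟨w, hvw⟩ := hH.exists_adj hv
  obtain ⟨t, ht, htv, -⟩ := R.exists_mem_core_of_adj hvw
  exact ⟨t, ht, htv⟩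

theorem nontrivial_verts_inter_bag (ht : t ∈ R.core H) : (H.verts ∩ R.bag t).Nontrivial := by
  obtain ⟨u, v, huv, hu, hv⟩ := ht
  exact ⟨u, ⟨huv.fst_mem, hu⟩, v, ⟨huv.snd_mem, hv⟩, huv.ne⟩

theorem bag_subset_verts (hH : IsLongestCycleSubgraph H) (ht : t ∈ R.core H) :
    R.bag t ⊆ H.verts := by
  obtain ⟨u, v, huv, hu, hv⟩ := ht
  intro x hx
  by_contra hxH
  have hxu : x ≠ u := fun h => hxH (h ▸ huv.fst_mem)
  have hxv : x ≠ v := fun h => hxH (h ▸ huv.snd_mem)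
  exact hxH <| hH.mem_verts_of_adj_of_adj huv (R.adj_of_mem_bag hxu.symm hu hx)
    (R.adj_of_mem_bag hxv hx hv)

theorem exists_mem_verts_of_inter_subsingleton {Y : Set V} (hY : (H.verts ∩ Y).Subsingleton)
    (ht : t ∈ R.core H) : ∃ v ∈ H.verts, v ∉ Y ∧ t ∈ R.S v := by
  obtain ⟨u, ⟨hu, htu⟩, v, ⟨hv, htv⟩, huv⟩ := R.nontrivial_verts_inter_bag ht
  by_cases huY : u ∈ Y
  · exact ⟨v, hv, fun hvY => huv (hY ⟨hu, huY⟩ ⟨hv, hvY⟩), htv⟩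
  · exact ⟨u, hu, huY, htu⟩

theorem nontrivial_verts_inter_linking (hH : IsCycleSubgraph H) {A B : Set W}
    (hAB : R.core H ⊆ A ∪ B) (hA : (R.core H ∩ A).Nonempty) (hB : (R.core H ∩ B).Nonempty) :
    (H.verts ∩ R.linking A B).Nontrivial := by
  by_contra hY
  rw [Set.not_nontrivial_iff] at hY
  obtain ⟨s, hs, hsA⟩ := hA
  obtain ⟨t, ht, htB⟩ := hB
  obtain ⟨u, hu, huY, hsu⟩ := R.exists_mem_verts_of_inter_subsingleton hY hs
  obtain ⟨v, hv, hvY, htv⟩ := R.exists_mem_verts_of_inter_subsingleton hY ht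
  refine hvY ⟨?_, t, htv, htB⟩
  refine hH.induction_of_inter_subsingleton hY (P := fun v => (R.S v ∩ A).Nonempty) ?_
    hu ⟨s, hsu, hsA⟩ hv hvY huY
  intro x y hxy hxY hxA
  obtain ⟨r, hr, hrx, hry⟩ := R.exists_mem_core_of_adj hxy
  rcases hAB hr with hrA | hrB
  · exact ⟨r, hry, hrA⟩
  · exact absurd ⟨hxA, r, hrx, hrB⟩ hxY

theorem mem_of_mem_linking_compl (hE : IsBranchAt T E c) (hv : v ∈ R.linking E Eᶜ) :
    c ∈ R.S v := by
  obtain ⟨⟨s, hs, hsE⟩, t, ht, htE⟩ := hv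
  by_contra hc
  exact htE (hE.subset_of_connected (R.subtree_connected v) hc hs hsE ht)

theorem core_subset_of_isBranchAt (hH : IsCycleSubgraph H) (hE : IsBranchAt T E c)
    (hbag : (H.verts ∩ R.bag c).Subsingleton) (hcore : (R.core H ∩ E).Nonempty) :
    R.core H ⊆ E := by
  intro t ht
  by_contra htE
  have hlink : (H.verts ∩ R.linking E Eᶜ).Nontrivial :=
    R.nontrivial_verts_inter_linking hH (by simp) hcore ⟨t, ht, htE⟩
  exact Set.not_nontrivial_iff.2 hbag <| hlink.mono fun v hv =>
    ⟨hv.1, R.mem_of_mem_linking_compl hE hv.2⟩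

theorem core_inter_nonempty_of_subsingleton (h2 : TwoConnected G)
    (hH : IsLongestCycleSubgraph H) (hH' : IsLongestCycleSubgraph H') (hE : IsBranchAt T E c)
    (hbag : (H.verts ∩ R.bag c).Subsingleton) (hcore : (R.core H ∩ E).Nonempty) :
    (R.core H' ∩ E).Nonempty := by
  obtain ⟨v, ⟨hv, hv'⟩, hvc⟩ : ∃ v ∈ H.verts ∩ H'.verts, v ∉ R.bag c := by
    by_contra! hall
    exact Set.not_nontrivial_iff.2 hbag <| (h2.nontrivial_verts_inter hH hH').mono fun v hv =>
      ⟨hv.1, hall v hv⟩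
  obtain ⟨s, hs, hsv⟩ := R.exists_mem_core hH.1 hv
  obtain ⟨t, ht, htv⟩ := R.exists_mem_core hH'.1 hv'
  have hsE : s ∈ E := R.core_subset_of_isBranchAt hH.1 hE hbag hcore hs
  exact ⟨t, ht, hE.subset_of_connected (R.subtree_connected v) hvc hsv hsE htv⟩

end TreeRep

end TreeRepresentations

section Ears

variable {V W : Type} {G : SimpleGraph V} {T : SimpleGraph W} {H : G.Subgraph} {a b u v x y z : V}
  {c : W} {E : Set W}

/-- An ear of the branch `E` at the hub `c`: a path of `G` between two distinct vertices of the
bag of `c` all of whose interior vertices live inside `E`. -/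
structure TreeRep.IsEar (R : TreeRep G T) (E : Set W) (c : W) (f : G.Walk u v) : Prop where
  isBranchAt : IsBranchAt T E c
  ne : u ≠ v
  isPath : f.IsPath
  start_mem : u ∈ R.bag c
  end_mem : v ∈ R.bag c
  interior_subset : ∀ x ∈ f.support, x ≠ u → x ≠ v → R.S x ⊆ E

variable (R : TreeRep G T)

theorem TreeRep.subset_of_adj (hE : IsBranchAt T E c) (hxy : G.Adj x y) (hx : R.S x ⊆ E)
    (hy : y ∉ R.bag c) : R.S y ⊆ E := by
  obtain ⟨s, hsx, hsy⟩ := (R.adj_iff x y hxy.ne).1 hxy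
  exact hE.subset_of_connected (R.subtree_connected y) hy hsy (hx hsx)

theorem TreeRep.exists_isEar (hH : IsCycleSubgraph H) (hE : IsBranchAt T E c)
    (hc : c ∉ R.core H) (hcore : (R.core H ∩ E).Nonempty) (hbag : (H.verts ∩ R.bag c).Nontrivial) :
    ∃ (a b : V) (g : G.Walk a b) (g' : G.Walk b a), IsArcPair H g g' ∧ R.IsEar E c g := by
  obtain ⟨x, hxH, hxc, hxE⟩ : ∃ x ∈ H.verts, x ∉ R.bag c ∧ R.S x ⊆ E := by
    obtain ⟨t, ⟨x, y, hxy, htx, hty⟩, htE⟩ := hcore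
    have inside : ∀ z, t ∈ R.S z → z ∉ R.bag c → R.S z ⊆ E := fun z htz hz =>
      hE.subset_of_connected (R.subtree_connected z) hz htz htE
    by_cases hx : x ∈ R.bag c
    · have hy : y ∉ R.bag c := fun hy => hc ⟨x, y, hxy, hx, hy⟩
      exact ⟨y, hxy.snd_mem, hy, inside y hty hy⟩
    · exact ⟨x, hxy.fst_mem, hx, inside x htx hx⟩
  obtain ⟨a, ha, b, hb, g, g', hg, hxg, hgc⟩ := hH.exists_isArcPair_through hxH hxc hbag
  refine ⟨a, b, g, g', hg, hE, hg.ne, hg.isPath_left, ha, hb, fun y hy hya hyb => ?_⟩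
  have hinterior := connected_induce_interior hg.isPath_left hy hya hyb
  refine induction_of_connected_induce hinterior (P := fun z => R.S z ⊆ E) ?_
    ⟨hxg, fun h => hxc (h ▸ ha), fun h => hxc (h ▸ hb)⟩ hxE ⟨hy, hya, hyb⟩
  intro y _ z hz hyz hyE
  exact R.subset_of_adj hE hyz hyE fun hzc => (hgc z hz.1 hzc).elim hz.2.1 hz.2.2

namespace TreeRep.IsEar

variable {R} {f : G.Walk u v}

theorem reverse (h : R.IsEar E c f) : R.IsEar E c f.reverse where
  isBranchAt := h.isBranchAt
  ne := h.ne.symm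
  isPath := h.isPath.reverse
  start_mem := h.end_mem
  end_mem := h.start_mem
  interior_subset x hx hxv hxu := h.interior_subset x (by simpa using hx) hxu hxv

theorem notMem_support (h : R.IsEar E c f) (hx : x ∈ R.bag c) (hxu : x ≠ u) (hxv : x ≠ v) :
    x ∉ f.support :=
  fun hxf => h.isBranchAt.1 (h.interior_subset x hxf hxu hxv hx)

theorem exists_isPath_of_ne (h : R.IsEar E c f) (hy : y ∈ R.bag c) (hz : z ∈ R.bag c)
    (hyz : y ≠ z) (hyv : y ≠ v) (hzu : z ≠ u) :
    ∃ f' : G.Walk y z, f'.IsPath ∧ f.length ≤ f'.length ∧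
      ∀ x ∈ f'.support, x = y ∨ x = z ∨ x ∈ f.support := by
  obtain ⟨f₁, hf₁, hlen₁, hsupp₁⟩ := exists_isPath_extending (y := y) h.isPath <| by
    by_cases hyu : y = u
    · exact .inl hyu
    · exact .inr ⟨h.notMem_support hy hyu hyv, R.adj_of_mem_bag hyu hy h.start_mem⟩
  obtain ⟨f₂, hf₂, hlen₂, hsupp₂⟩ := exists_isPath_extending (y := z) hf₁.reverse <| by
    by_cases hzv : z = v
    · exact .inl hzv
    · refine .inr ⟨fun hzf => ?_, R.adj_of_mem_bag hzv hz h.end_mem⟩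
      rcases hsupp₁ z (by simpa using hzf) with hzy | hzf
      · exact hyz hzy.symm
      · exact h.notMem_support hz hzu hzv hzf
  refine ⟨f₂.reverse, hf₂.reverse, ?_, fun x hx => ?_⟩
  · rw [Walk.length_reverse] at hlen₂ ⊢
    omega
  · rcases hsupp₂ x (by simpa using hx) with hxz | hx
    · exact .inr (.inl hxz)
    · exact (hsupp₁ x (by simpa using hx)).imp_right .inr

theorem exists_isPath (h : R.IsEar E c f) (hy : y ∈ R.bag c) (hz : z ∈ R.bag c) (hyz : y ≠ z) :
    ∃ f' : G.Walk y z, f'.IsPath ∧ f.length ≤ f'.length ∧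
      ∀ x ∈ f'.support, x = y ∨ x = z ∨ x ∈ f.support := by
  by_cases hyv : y = v
  · have hyu : y ≠ u := fun hyu => h.ne (hyu.symm.trans hyv)
    have hzv : z ≠ v := fun hzv => hyz (hyv.trans hzv.symm)
    simpa using h.reverse.exists_isPath_of_ne hy hz hyz hyu hzv
  · by_cases hzu : z = u
    · have hzv : z ≠ v := fun hzv => h.ne (hzu.symm.trans hzv)
      have hyu : y ≠ u := fun hyu => hyz (hyu.trans hzu.symm)
      simpa using h.reverse.exists_isPath_of_ne hy hz hyz hyu hzv
    · exact h.exists_isPath_of_ne hy hz hyz hyv hzu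

/-- The ear `f` can be spliced into `H` in place of the arc `g`, by way of `y` and `z` if the two
hubs differ. -/
theorem length_lt_of_isArcPair {c' : W} (h : R.IsEar E c f) (hH : IsLongestCycleSubgraph H)
    {g : G.Walk a b} {g' : G.Walk b a} (hg : IsArcPair H g g') (ha : a ∈ R.bag c')
    (hb : b ∈ R.bag c') (hfH : ∀ x ∈ f.support, x ∉ H.verts) (hyH : y ∉ H.verts)
    (hzH : z ∉ H.verts) (hy : y ∈ R.bag c ∩ R.bag c') (hz : z ∈ R.bag c ∩ R.bag c')
    (hyz : c ≠ c' → y ≠ z) : f.length < g.length := by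
  obtain ⟨s, t, f', hs, ht, hf', hlen, hf'H⟩ : ∃ (s t : V) (f' : G.Walk s t), s ∈ R.bag c' ∧
      t ∈ R.bag c' ∧ f'.IsPath ∧ f.length ≤ f'.length ∧ ∀ x ∈ f'.support, x ∉ H.verts := by
    by_cases hcc : c = c'
    · exact ⟨u, v, f, hcc ▸ h.start_mem, hcc ▸ h.end_mem, h.isPath, le_rfl, hfH⟩
    · obtain ⟨f', hf', hlen, hsupp⟩ := h.exists_isPath hy.1 hz.1 (hyz hcc)
      refine ⟨y, z, f', hy.2, hz.2, hf', hlen, fun x hx => ?_⟩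
      rcases hsupp x hx with rfl | rfl | hx
      exacts [hyH, hzH, hfH x hx]
  have has : a ≠ s := fun h => hf'H s (by simp) (h ▸ hg.mem_verts.2 (by simp))
  have htb : t ≠ b := fun h => hf'H t (by simp) (h ▸ hg.mem_verts.2 (by simp))
  have := hg.length_add_two_le hH hf' hf'H (R.adj_of_mem_bag has ha hs)
    (R.adj_of_mem_bag htb ht hb)
  omega

end TreeRep.IsEar

theorem TreeRep.exists_longest_isEar [Finite V] {B : Set W → W → Prop}
    (hex : ∃ E c, B E c ∧ ∃ (u v : V) (f : G.Walk u v), R.IsEar E c f) :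
    ∃ E c, B E c ∧ ∃ (u v : V) (f : G.Walk u v), R.IsEar E c f ∧
      ∀ E' c', B E' c' → ∀ (a b : V) (g : G.Walk a b), R.IsEar E' c' g → g.length ≤ f.length := by
  have := Fintype.ofFinite V
  let lengths : Set ℕ := {n | ∃ E c, B E c ∧ ∃ (u v : V) (f : G.Walk u v),
    R.IsEar E c f ∧ f.length = n}
  have hne : lengths.Nonempty := by
    obtain ⟨E, c, hB, u, v, f, hf⟩ := hex
    exact ⟨_, E, c, hB, u, v, f, hf, rfl⟩
  have hbdd : BddAbove lengths := by
    refine ⟨Fintype.card V, ?_⟩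
    rintro _ ⟨E, c, -, u, v, f, hf, rfl⟩
    exact hf.isPath.length_lt.le
  obtain ⟨E, c, hB, u, v, f, hf, hlen⟩ := Nat.sSup_mem hne hbdd
  exact ⟨E, c, hB, u, v, f, hf, fun E' c' hB' a b g hg =>
    hlen ▸ le_csSup hbdd ⟨E', c', hB', a, b, g, hg, rfl⟩⟩

/-- The four vertices are `y`, `z` and the two ends of a longest ear. -/
theorem TreeRep.exists_card_le_four_of_ears [Finite V] {F : Set G.Subgraph}
    (hF : ∀ H ∈ F, IsLongestCycleSubgraph H) {B : Set W → W → Prop}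
    (hy : ∀ E c, B E c → y ∈ R.bag c) (hz : ∀ E c, B E c → z ∈ R.bag c)
    (hyz : ∀ E c E' c', B E c → B E' c' → c ≠ c' → y ≠ z)
    (hear : ∀ H ∈ F, y ∉ H.verts → ∃ E c, B E c ∧
      ∃ (a b : V) (g : G.Walk a b) (g' : G.Walk b a), IsArcPair H g g' ∧ R.IsEar E c g) :
    ∃ A : Finset V, A.card ≤ 4 ∧ ((∀ H ∈ F, ∃ v ∈ A, v ∈ H.verts) ∨
      ∃ E c, B E c ∧ ∀ H ∈ F, (∀ v ∈ A, v ∉ H.verts) → (R.core H ∩ E).Nonempty) := by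
  classical
  by_cases hex : ∃ E c, B E c ∧ ∃ (u v : V) (f : G.Walk u v), R.IsEar E c f
  · obtain ⟨E, c, hB, u, v, f, hf, hmax⟩ := R.exists_longest_isEar hex
    refine ⟨{u, v, y, z}, Finset.card_le_four, .inr ⟨E, c, hB, fun H hH hA => ?_⟩⟩
    simp only [Finset.mem_insert, Finset.mem_singleton, forall_eq_or_imp, forall_eq] at hA
    obtain ⟨huH, hvH, hyH, hzH⟩ := hA
    obtain ⟨E', c', hB', a, b, g, g', hg, hgear⟩ := hear H hH hyH
    obtain ⟨x, hxf, hxH⟩ : ∃ x ∈ f.support, x ∈ H.verts := by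
      by_contra! hfH
      exact (hmax E' c' hB' a b g hgear).not_gt <|
        hf.length_lt_of_isArcPair (hF H hH) hg hgear.start_mem hgear.end_mem hfH hyH hzH
          ⟨hy E c hB, hy E' c' hB'⟩ ⟨hz E c hB, hz E' c' hB'⟩ (hyz E c E' c' hB hB')
    obtain ⟨t, ht, htx⟩ := R.exists_mem_core (hF H hH).1 hxH
    exact ⟨t, ht, hf.interior_subset x hxf (fun h => huH (h ▸ hxH)) (fun h => hvH (h ▸ hxH)) htx⟩
  · refine ⟨{y}, by simp, .inl fun H hH => ⟨y, by simp, ?_⟩⟩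
    by_contra hyH
    obtain ⟨E, c, hB, a, b, g, -, -, hg⟩ := hear H hH hyH
    exact hex ⟨E, c, hB, a, b, g, hg⟩

end Ears

section Rounds

/-- Take `i` to be the least of the maxima of the members of `𝓛`, then `k` minimal. -/
theorem exists_hitting_interval {𝓛 : Set (Set ℕ)} (h𝓛 : 𝓛.Nonempty) (hne : ∀ L ∈ 𝓛, L.Nonempty)
    {N : ℕ} (hN : ∀ L ∈ 𝓛, ∀ n ∈ L, n ≤ N) :
    ∃ i k, (∀ L ∈ 𝓛, ∃ n ∈ L, i ≤ n ∧ n ≤ k) ∧ (∃ L ∈ 𝓛, ∀ n ∈ L, n ≤ i) ∧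
      (i < k → ∃ L ∈ 𝓛, ∀ n ∈ L, n < i ∨ k ≤ n) := by
  classical
  let lower : Set ℕ := {i | ∀ L ∈ 𝓛, ∃ n ∈ L, i ≤ n}
  have hlower : lower.Nonempty := ⟨0, fun L hL => (hne L hL).imp fun n hn => ⟨hn, n.zero_le⟩⟩
  have hbdd : BddAbove lower := by
    obtain ⟨L, hL⟩ := h𝓛
    refine ⟨N, fun i hi => ?_⟩
    obtain ⟨n, hn, hin⟩ := hi L hL
    exact hin.trans (hN L hL n hn)
  have hi := Nat.sSup_mem hlower hbdd
  have hmax : sSup lower + 1 ∉ lower := fun h => (Nat.lt_succ_self _).not_ge (le_csSup hbdd h)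
  generalize sSup lower = i at hi hmax
  have hupper : ∃ k, ∀ L ∈ 𝓛, ∃ n ∈ L, i ≤ n ∧ n ≤ k := ⟨N, fun L hL =>
    (hi L hL).imp fun n hn => ⟨hn.1, hn.2, hN L hL n hn.1⟩⟩
  refine ⟨i, Nat.find hupper, Nat.find_spec hupper, ?_, fun hik => ?_⟩
  · simp only [lower, Set.mem_ofPred_eq] at hmax
    push Not at hmax
    exact hmax.imp fun L hL => ⟨hL.1, fun n hn => Nat.lt_succ_iff.1 (hL.2 n hn)⟩
  · have hmin := Nat.find_min hupper (m := Nat.find hupper - 1) (by omega)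
    push Not at hmin
    refine hmin.imp fun L hL => ⟨hL.1, fun n hn => ?_⟩
    by_contra! hn'
    have := hL.2 n hn hn'.1
    omega

variable {V W : Type} {G : SimpleGraph V} {T : SimpleGraph W} {X D : Set W} {q : ℕ → W}
  {lev : W → ℕ} {H₁ H₂ : G.Subgraph} {F : Set G.Subgraph} {i k : ℕ}

namespace IsLevelFunction

theorem linking_subset_bag (hL : IsLevelFunction T X D q lev) (R : TreeRep G T) {α β j : ℕ}
    (hαβ : α < β) (hj : 0 < j) (hαj : α ≤ j) (hjβ : j ≤ β) :
    R.linking {t | lev t ≤ α} {t | β ≤ lev t} ⊆ R.bag (q j) := by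
  rintro y ⟨⟨s, hs, hsα⟩, t, ht, hβt⟩
  exact hL.spine_mem_of_connected (R.subtree_connected y) hs ht ((hsα.trans_lt hαβ).trans_le hβt)
    hj (hsα.trans hαj) (hjβ.trans hβt)

theorem nontrivial_common_bag (h2 : TwoConnected G) (hL : IsLevelFunction T X D q lev)
    (R : TreeRep G T) (hi : 0 < i) (hik : i < k)
    (hH₁ : IsLongestCycleSubgraph H₁) (hlow : ∀ t ∈ R.core H₁, lev t ≤ i)
    (hH₂ : IsLongestCycleSubgraph H₂) (hgap : ∀ t ∈ R.core H₂, lev t < i ∨ k ≤ lev t)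
    (hhigh : ∃ t ∈ R.core H₂, i ≤ lev t) :
    {y | ∀ j ∈ Set.Icc i k, y ∈ R.bag (q j)}.Nontrivial := by
  by_cases hcross : ∃ t ∈ R.core H₂, lev t < i
  · have hlink : (H₂.verts ∩ R.linking {t | lev t ≤ i - 1} {t | k ≤ lev t}).Nontrivial := by
      refine R.nontrivial_verts_inter_linking hH₂.1 (fun t ht => ?_) ?_ ?_
      · exact (hgap t ht).imp_left Nat.le_sub_one_of_lt
      · obtain ⟨t, ht, hti⟩ := hcross
        exact ⟨t, ht, Nat.le_sub_one_of_lt hti⟩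
      · obtain ⟨t, ht, hit⟩ := hhigh
        exact ⟨t, ht, (hgap t ht).resolve_left hit.not_gt⟩
    refine hlink.mono fun y hy j hj => ?_
    have hij := hj.1
    exact hL.linking_subset_bag R (by omega) (by omega) (by omega) hj.2 hy.2
  · push Not at hcross
    refine (h2.nontrivial_verts_inter hH₁ hH₂).mono fun y hy j hj => ?_
    obtain ⟨s, hs, hsy⟩ := R.exists_mem_core hH₁.1 hy.1
    obtain ⟨t, ht, hty⟩ := R.exists_mem_core hH₂.1 hy.2
    exact hL.linking_subset_bag R hik (hi.trans_le hj.1) hj.1 hj.2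
      ⟨⟨s, hsy, hlow s hs⟩, t, hty, (hgap t ht).resolve_left (hcross t ht).not_gt⟩

theorem exists_hitting_levels [Finite W] (h2 : TwoConnected G)
    (hL : IsLevelFunction T X D q lev) (R : TreeRep G T) (hne : F.Nonempty)
    (hF : ∀ H ∈ F, IsLongestCycleSubgraph H) (hFX : ∀ H ∈ F, (R.core H ∩ X).Nonempty)
    (hbag : ∀ H ∈ F, ∀ t ∈ R.core H ∩ X, (R.bag (q (lev t))).Nonempty) :
    ∃ J : Set ℕ, (∀ H ∈ F, ∃ t ∈ R.core H ∩ X, lev t ∈ J) ∧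
      ∃ y z, (J.Nontrivial → y ≠ z) ∧ ∀ j ∈ J, y ∈ R.bag (q j) ∧ z ∈ R.bag (q j) := by
  obtain ⟨N, hN⟩ := (Set.finite_range lev).bddAbove
  obtain ⟨i, k, hhit, ⟨_, ⟨H₁, hH₁, rfl⟩, hlow⟩, hgap⟩ :=
    exists_hitting_interval (𝓛 := (fun H => lev '' R.core H) '' F) (hne.image _) (N := N)
      (by rintro _ ⟨H, hH, rfl⟩; exact (hFX H hH).left.image _)
      (by rintro _ ⟨H, -, rfl⟩ _ ⟨t, -, rfl⟩; exact hN ⟨t, rfl⟩)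
  simp only [Set.forall_mem_image, Set.exists_mem_image] at hhit hlow hgap
  have hi : 0 < i := by
    obtain ⟨t, ht, htX⟩ := hFX H₁ hH₁
    exact ((hL.pos_iff t).2 htX).trans_le (hlow ht)
  have hhitX : ∀ H ∈ F, ∃ t ∈ R.core H ∩ X, lev t ∈ Set.Icc i k := fun H hH => by
    obtain ⟨t, ht, htJ⟩ := hhit hH
    exact ⟨t, ⟨ht, (hL.pos_iff t).1 (hi.trans_le htJ.1)⟩, htJ⟩
  refine ⟨Set.Icc i k, hhitX, ?_⟩
  by_cases hik : i < k
  · obtain ⟨H₂, hH₂, hgap₂⟩ := hgap hik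
    obtain ⟨t, ⟨ht, -⟩, htJ⟩ := hhitX H₂ hH₂
    obtain ⟨y, hy, z, hz, hyz⟩ := hL.nontrivial_common_bag h2 R hi hik (hF H₁ hH₁)
      (@hlow) (hF H₂ hH₂) (@hgap₂) ⟨t, ht, htJ.1⟩
    exact ⟨y, z, fun _ => hyz, fun j hj => ⟨hy j hj, hz j hj⟩⟩
  · have hsub : (Set.Icc i k).Subsingleton := Set.subsingleton_Icc_of_ge (not_lt.1 hik)
    obtain ⟨t, ht, htJ⟩ := hhitX H₁ hH₁
    obtain ⟨y, hy⟩ := hbag H₁ hH₁ t ht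
    exact ⟨y, y, fun h => absurd hsub (Set.not_subsingleton_iff.2 h), fun j hj =>
      hsub htJ hj ▸ ⟨hy, hy⟩⟩

theorem exists_isEar (hL : IsLevelFunction T X D q lev) (R : TreeRep G T) {H : G.Subgraph}
    (hH : IsLongestCycleSubgraph H) {t : W} (ht : t ∈ R.core H ∩ X) {y : V}
    (hy : y ∈ R.bag (q (lev t))) (hyH : y ∉ H.verts)
    (hbag : (H.verts ∩ R.bag (q (lev t))).Nontrivial) :
    ∃ E, IsCompOf T (X \ D) E ∧ ∃ (a b : V) (g : G.Walk a b) (g' : G.Walk b a),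
      IsArcPair H g g' ∧ R.IsEar E (q (lev t)) g := by
  have hq : q (lev t) ∉ R.core H := fun hq => hyH (R.bag_subset_verts hH hq hy)
  have htD : t ∉ D := fun htD => hq (hL.eq_spine t htD ▸ ht.1)
  obtain ⟨E, hE, htE⟩ := exists_isCompOf T (S := X \ D) ⟨ht.2, htD⟩
  exact ⟨E, hE, R.exists_isEar hH.1 (hL.isBranchAt_of_isCompOf hE htE) hq ⟨t, ht.1, htE⟩ hbag⟩

theorem nontrivial_or_exists_isCompOf (h2 : TwoConnected G) (hL : IsLevelFunction T X D q lev)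
    (R : TreeRep G T) {H : G.Subgraph} (hH : IsLongestCycleSubgraph H) {t : W}
    (ht : t ∈ R.core H ∩ X) :
    (H.verts ∩ R.bag (q (lev t))).Nontrivial ∨ ∃ E, IsCompOf T (X \ D) E ∧
      ∀ H', IsLongestCycleSubgraph H' → (R.core H' ∩ E).Nonempty := by
  rw [or_iff_not_imp_left, Set.not_nontrivial_iff]
  intro hbag
  have htD : t ∉ D := fun htD => Set.not_nontrivial_iff.2 hbag <|
    hL.eq_spine t htD ▸ R.nontrivial_verts_inter_bag ht.1
  obtain ⟨E, hE, htE⟩ := exists_isCompOf T (S := X \ D) ⟨ht.2, htD⟩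
  exact ⟨E, hE, fun H' hH' => R.core_inter_nonempty_of_subsingleton h2 hH hH'
    (hL.isBranchAt_of_isCompOf hE htE) hbag ⟨t, ht.1, htE⟩⟩

theorem exists_card_le_four [Finite W] (h2 : TwoConnected G) (hL : IsLevelFunction T X D q lev)
    (R : TreeRep G T) (hF : ∀ H ∈ F, IsLongestCycleSubgraph H)
    (hFX : ∀ H ∈ F, (R.core H ∩ X).Nonempty) :
    ∃ A : Finset V, A.card ≤ 4 ∧ ((∀ H ∈ F, ∃ v ∈ A, v ∈ H.verts) ∨
      ∃ E, IsCompOf T (X \ D) E ∧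
        ∀ H ∈ F, (∀ v ∈ A, v ∉ H.verts) → (R.core H ∩ E).Nonempty) := by
  rcases F.eq_empty_or_nonempty with rfl | hne
  · exact ⟨∅, by simp, .inl (by simp)⟩
  by_cases hcommon : ∃ E, IsCompOf T (X \ D) E ∧
      ∀ H, IsLongestCycleSubgraph H → (R.core H ∩ E).Nonempty
  · obtain ⟨E, hE, hcore⟩ := hcommon
    exact ⟨∅, by simp, .inr ⟨E, hE, fun H hH _ => hcore H (hF H hH)⟩⟩
  have hbag : ∀ H ∈ F, ∀ t ∈ R.core H ∩ X, (H.verts ∩ R.bag (q (lev t))).Nontrivial :=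
    fun H hH t ht => (hL.nontrivial_or_exists_isCompOf h2 R (hF H hH) ht).resolve_right hcommon
  have := h2.finite
  obtain ⟨J, hJ, y, z, hyz, hbags⟩ := hL.exists_hitting_levels h2 R hne hF hFX
    fun H hH t ht => (hbag H hH t ht).nonempty.right
  obtain ⟨A, hA, hhit | ⟨E, c, ⟨hE, -⟩, hcore⟩⟩ := R.exists_card_le_four_of_ears hF
    (B := fun E c => IsCompOf T (X \ D) E ∧ ∃ j ∈ J, c = q j) (y := y) (z := z)
    (by rintro E c ⟨-, j, hj, rfl⟩; exact (hbags j hj).1)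
    (by rintro E c ⟨-, j, hj, rfl⟩; exact (hbags j hj).2)
    (by rintro E c E' c' ⟨-, j, hj, rfl⟩ ⟨-, j', hj', rfl⟩ hne
        exact hyz ⟨j, hj, j', hj', fun h => hne (h ▸ rfl)⟩)
    (fun H hH hyH => by
      obtain ⟨t, ht, htJ⟩ := hJ H hH
      obtain ⟨E, hE, hear⟩ := hL.exists_isEar R (hF H hH) ht (hbags _ htJ).1 hyH (hbag H hH t ht)
      exact ⟨E, _, ⟨hE, _, htJ, rfl⟩, hear⟩)
  · exact ⟨A, hA, .inl hhit⟩
  · exact ⟨A, hA, .inr ⟨E, hE, hcore⟩⟩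

end IsLevelFunction

end Rounds

section Game

variable {V W : Type} [Finite W] {G : SimpleGraph V} {T : SimpleGraph W} {X : Set W} {x : W}

theorem exists_transversal_of_cutterWins (h2 : TwoConnected G) (R : TreeRep G T) {n : ℕ}
    (hwin : cutterWins T n X x) (hX : IsRootedAt T X x) {F : Set G.Subgraph}
    (hF : ∀ H ∈ F, IsLongestCycleSubgraph H) (hFX : ∀ H ∈ F, (R.core H ∩ X).Nonempty) :
    ∃ A : Finset V, A.card ≤ 4 * n ∧ ∀ H ∈ F, ∃ v ∈ A, v ∈ H.verts := by
  classical
  induction n generalizing X x F with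
  | zero => exact hwin.elim
  | succ n ih =>
    obtain ⟨z, -, p, hp, hpX, hwin⟩ := hwin
    obtain ⟨q, lev, hL⟩ := IsLevelFunction.exists_of_isPath R.isTree.isAcyclic hX p hp hpX
    obtain ⟨A, hA, hhit | ⟨E, hE, hcore⟩⟩ := hL.exists_card_le_four h2 R hF hFX
    · exact ⟨A, by omega, hhit⟩
    obtain ⟨t, htE⟩ := hE.1
    obtain ⟨htX, htp⟩ := hE.2.1 htE
    have hwin := hwin.resolve_left fun h => htp (h ▸ htX)
    have hbranch := hL.isBranchAt_of_isCompOf hE htE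
    obtain ⟨x', hx', hadj⟩ := hbranch.exists_adj R.isTree.connected.preconnected hE.1
    obtain ⟨A', hA', hhit'⟩ := ih (hwin E x' hE hx' ⟨_, hL.spine_mem t htX, hadj⟩)
      (hbranch.isRootedAt R.isTree.isAcyclic hE.2.2.1 hx' hadj)
      (F := {H ∈ F | ∀ v ∈ A, v ∉ H.verts}) (fun H hH => hF H hH.1) (fun H hH => hcore H hH.1 hH.2)
    refine ⟨A ∪ A', (Finset.card_union_le A A').trans (by omega), fun H hH => ?_⟩
    by_cases hHA : ∀ v ∈ A, v ∉ H.verts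
    · exact (hhit' H ⟨hH, hHA⟩).imp fun v hv => ⟨Finset.mem_union_right _ hv.1, hv.2⟩
    · push Not at hHA
      exact hHA.imp fun v hv => ⟨Finset.mem_union_left _ hv.1, hv.2⟩

theorem cutterWins_of_ncard_le {n : ℕ} (hx : x ∈ X) (hn : X.ncard ≤ n) : cutterWins T n X x := by
  induction n generalizing X x with
  | zero => exact (((Set.ncard_pos X.toFinite).2 ⟨x, hx⟩).not_ge hn).elim
  | succ n ih =>
    refine ⟨x, hx, .nil, .nil, by simpa using hx, .inr fun E x' hE hx' _ => ih hx' ?_⟩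
    have hssub : E ⊂ X := (Set.ssubset_iff_of_subset (hE.2.1.trans Set.sdiff_subset)).2
      ⟨x, hx, fun hxE => (hE.2.1 hxE).2 (by simp)⟩
    have := Set.ncard_lt_ncard hssub X.toFinite
    omega

theorem exists_cutterWins_ccg [Nonempty W] (T : SimpleGraph W) :
    ∃ r, cutterWins T (ccg T) Set.univ r := by
  obtain ⟨r, hr⟩ := Nat.sInf_mem (Set.range_nonempty fun r : W => ccgOn T Set.univ r)
  refine ⟨r, ?_⟩
  rw [ccg, ← hr]
  exact Nat.sInf_mem (s := {n | cutterWins T n Set.univ r})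
    ⟨_, cutterWins_of_ncard_le (Set.mem_univ r) le_rfl⟩

end Game

theorem lct_le_ccg_general {V W : Type} [Finite W] (G : SimpleGraph V) (T : SimpleGraph W)
    (h2 : TwoConnected G) (R : TreeRep G T) : lct G ≤ 4 * ccg T := by
  have := R.isTree.connected.nonempty
  obtain ⟨r, hr⟩ := exists_cutterWins_ccg T
  have hroot : IsRootedAt T Set.univ r := ⟨Set.mem_univ r, fun _ _ t ht => (ht trivial).elim⟩
  obtain ⟨A, hA, hhit⟩ := exists_transversal_of_cutterWins h2 R hr hroot
    (F := {H | IsLongestCycleSubgraph H}) (fun _ hH => hH) fun H hH => by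
      obtain ⟨v, hv⟩ := hH.1.nonempty_verts
      obtain ⟨t, ht, -⟩ := R.exists_mem_core hH.1 hv
      exact ⟨t, ht, Set.mem_univ t⟩
  calc lct G ≤ (A : Set V).ncard := Nat.sInf_le ⟨A, A.finite_toSet, rfl, fun a c hc => by
        simpa using hhit _ hc.isLongestCycleSubgraph⟩
    _ = A.card := Set.ncard_coe_finset A
    _ ≤ 4 * ccg T := hA

/-- If `G` is a 2-connected chordal graph with minimal tree representation
`T`, then `lct(G) ≤ 4 · ccg(T)`. -/
theorem lct_le_ccg {V W : Type} [Fintype V] [Fintype W] (G : SimpleGraph V)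
    (T : SimpleGraph W) (hchordal : IsChordal G) (h2 : TwoConnected G)
    (R : TreeRep G T) (hmin : R.IsMinimal) :
    lct G ≤ 4 * ccg T := by
  exact lct_le_ccg_general G T h2 R
end

section
/- Let G be a connected chordal graph with a minimal rooted tree representation T. Let X be a subtree of T rooted at x, let z ∈ V(X), and let Q be the x–z path in X. Let 𝒫 be a family of longest paths of G such that X has the core capture property for 𝒫 and such that each endpoint of each P ∈ 𝒫 has a subtree containing a vertex outside X. Then there is a set A ⊆ V(G) with |A| ≤ 4 such that the family 𝒫′ of paths in 𝒫 that are disjoint from A is either empty, or there is a component X′ of X − V(Q) such that X′ has the core capture property for 𝒫′. -/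
open SimpleGraph

/-!
Write `Q` for the path from `x` to `z`. Among the vertices of `G` whose subtrees contain `x`,
choose `w` reaching furthest along `Q`. If a longest path misses `w`, then `w` is adjacent to no two
consecutive vertices of it, so its core avoids the subtree of `w`. As its ends leave `X`, it enters
`X` at a vertex `c` in the bag of `x`, and by the choice of `w` it then stays in a single component
`C` of `X - Q` until it reaches a neighbour `d` of `w`. Call the segment from `c` to `d` an ear.

Among all ears of paths in the family missing `w`, take a longest one, running from `c'` to `d'`
through the component `C'`. Then `A = {w, c', d'}` works: if a path misses `A` and its core misses
`C'`, replacing its ear by `c, c', …, d', w, d` makes it longer.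
-/

section Walks

variable {V : Type*} {G : SimpleGraph V}

theorem exists_eq_append_cons_of_exit {u v : V} (p : G.Walk u v) {S : Set V} (hu : u ∈ S)
    (hv : v ∉ S) :
    ∃ (c d : V) (p₁ : G.Walk u c) (h : G.Adj c d) (p₂ : G.Walk d v),
      p = p₁.append (.cons h p₂) ∧ (∀ y ∈ p₁.support, y ∈ S) ∧ d ∉ S := by
  induction p with
  | nil => exact absurd hu hv
  | @cons u d v h p ih =>
    by_cases hd : d ∈ S
    · obtain ⟨c, d', p₁, h', p₂, rfl, hp₁, hd'⟩ := ih hd hv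
      exact ⟨c, d', .cons h p₁, h', p₂, rfl, by simpa [hu] using hp₁, hd'⟩
    · exact ⟨u, d, .nil, h, p, rfl, by simpa using hu, hd⟩

theorem isPath_append_append_of_internally_disjoint {a b u v : V} {α : G.Walk a u}
    {E D : G.Walk u v} {β : G.Walk v b} (hP : ((α.append E).append β).IsPath) (hD : D.IsPath)
    (hdisj : ∀ y ∈ D.support, y ∈ ((α.append E).append β).support → y = u ∨ y = v) :
    ((α.append D).append β).IsPath := by
  by_cases huv : u = v
  · subst huv
    have hE : E.IsPath := hP.of_append_left.of_append_right
    rwa [(Walk.isPath_iff_nil.1 hD).eq_nil, ← (Walk.isPath_iff_nil.1 hE).eq_nil]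
  · have hvE : v ∈ E.support.tail := Walk.end_mem_tail_support (Walk.not_nil_of_ne huv)
    have hDsupp : D.support = u :: D.support.tail := D.cons_tail_support.symm
    replace hP := hP.support_nodup
    replace hD := hD.support_nodup
    rw [Walk.isPath_def]
    simp only [Walk.support_append, List.nodup_append, List.mem_append] at hP hdisj ⊢
    grind

end Walks

namespace IsLongestPath

variable {V : Type} {G : SimpleGraph V} {a b u v : V} {P : G.Walk a b}

theorem length_le_of_isSubwalk (hP : IsLongestPath G P) {E D : G.Walk u v}
    (hE : E.IsSubwalk P) (hD : D.IsPath)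
    (hdisj : ∀ y ∈ D.support, y ∈ P.support → y = u ∨ y = v) : D.length ≤ E.length := by
  obtain ⟨α, β, rfl⟩ := hE
  have hlen := hP.2 _ _ _ (isPath_append_append_of_internally_disjoint hP.1 hD hdisj)
  simp only [Walk.length_append] at hlen
  omega

theorem not_adj_of_adj (hP : IsLongestPath G P) {w : V} (hw : w ∉ P.support)
    (huv : P.toSubgraph.Adj u v) (hu : G.Adj w u) : ¬ G.Adj w v := by
  intro hv
  have hadj : G.Adj u v := huv.adj_sub
  rcases (Walk.isSubwalk_toWalk_iff_mem_edges hadj).2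
    (Walk.adj_toSubgraph_iff_mem_edges.1 huv) with hsub | hsub
  · have := hP.length_le_of_isSubwalk hsub (D := .cons hu.symm hv.toWalk)
      (by simp [hu.ne', hv.ne, hadj.ne])
      (by simp only [Walk.support_cons, Walk.support_nil]; grind)
    simp at this
  · have := hP.length_le_of_isSubwalk hsub (D := .cons hv.symm hu.toWalk)
      (by simp [hv.ne', hu.ne, hadj.ne'])
      (by simp only [Walk.support_cons, Walk.support_nil]; grind)
    simp at this

end IsLongestPath

section Trees

variable {W : Type*} {T : SimpleGraph W} {S : Set W}

theorem exists_isPath_of_preconnected_induce (hS : (T.induce S).Preconnected) {s t : W}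
    (hs : s ∈ S) (ht : t ∈ S) : ∃ p : T.Walk s t, p.IsPath ∧ ∀ y ∈ p.support, y ∈ S := by
  obtain ⟨p, hp⟩ := hS.exists_isPath ⟨s, hs⟩ ⟨t, ht⟩
  refine ⟨p.map (Embedding.induce S).toHom, hp.map (Embedding.induce (G := T) S).injective, ?_⟩
  intro y hy
  obtain ⟨y', -, rfl⟩ := List.mem_map.1 (p.support_map _ ▸ hy)
  exact y'.2

theorem mem_of_mem_support_of_preconnected_induce (hT : T.IsAcyclic)
    (hS : (T.induce S).Preconnected) {s t y : W} (hs : s ∈ S) (ht : t ∈ S) {p : T.Walk s t}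
    (hp : p.IsPath) (hy : y ∈ p.support) : y ∈ S := by
  obtain ⟨p', hp', hp'S⟩ := exists_isPath_of_preconnected_induce hS hs ht
  have hpp' : p = p' := congrArg Subtype.val ((hT.subsingleton_path s t).elim ⟨p, hp⟩ ⟨p', hp'⟩)
  exact hp'S y (hpp' ▸ hy)

theorem exists_adj_of_preconnected_induce (hS : (T.induce S).Preconnected) {C : Set W}
    (hSC : (S ∩ C).Nonempty) (hSC' : ¬ S ⊆ C) :
    ∃ c ∈ S ∩ C, ∃ d ∈ S \ C, T.Adj c d := by
  obtain ⟨s, hs, hsC⟩ := hSC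
  obtain ⟨t, ht, htC⟩ := Set.not_subset.1 hSC'
  obtain ⟨p, -, hp⟩ := exists_isPath_of_preconnected_induce hS hs ht
  obtain ⟨d, hd, hd₁, hd₂⟩ := p.exists_boundary_dart C hsC htC
  exact ⟨d.fst, ⟨hp _ (p.dart_fst_mem_support_of_mem_darts hd), hd₁⟩,
    d.snd, ⟨hp _ (p.dart_snd_mem_support_of_mem_darts hd), hd₂⟩, d.adj⟩

theorem inter_support_subset_total {S' : Set W} {x z : W} (hT : T.IsAcyclic)
    (hS : (T.induce S).Preconnected) (hS' : (T.induce S').Preconnected) (hx : x ∈ S)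
    (hx' : x ∈ S') {q : T.Walk x z} (hq : q.IsPath) :
    {y | y ∈ q.support} ∩ S ⊆ S' ∨ {y | y ∈ q.support} ∩ S' ⊆ S := by
  classical
  by_contra! h
  obtain ⟨⟨y, ⟨hyq, hyS⟩, hyS'⟩, ⟨y', ⟨hyq', hy'S'⟩, hy'S⟩⟩ :=
    And.intro (Set.not_subset.1 h.1) (Set.not_subset.1 h.2)
  rcases List.prefix_or_prefix_of_prefix (q.support_takeUntil_prefix_support hyq)
    (q.support_takeUntil_prefix_support hyq') with hpre | hpre
  · exact hyS' (mem_of_mem_support_of_preconnected_induce hT hS' hx' hy'S' (hq.takeUntil hyq')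
      (hpre.subset (Walk.end_mem_support _)))
  · exact hy'S (mem_of_mem_support_of_preconnected_induce hT hS hx hyS (hq.takeUntil hyq)
      (hpre.subset (Walk.end_mem_support _)))

end Trees

section Components

variable {W : Type} {T : SimpleGraph W} {S : Set W} {r x : W}

theorem mem_of_not_subset_rootedSubtree (hS : (T.induce S).Preconnected)
    (hmeet : (S ∩ rootedSubtree T r x).Nonempty) (hleave : ¬ S ⊆ rootedSubtree T r x) :
    x ∈ S := by
  classical
  obtain ⟨s, hs, hsX⟩ := hmeet
  obtain ⟨t, ht, htX⟩ := Set.not_subset.1 hleave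
  obtain ⟨p, -, hxp⟩ : ∃ p : T.Walk r t, p.IsPath ∧ x ∉ p.support := by
    simpa [rootedSubtree] using htX
  obtain ⟨p', -, hp'S⟩ := exists_isPath_of_preconnected_induce hS ht hs
  have hx : x ∈ (p.append p').support :=
    (p.append p').support_bypass_subset_support (hsX _ (p.append p').bypass_isPath)
  exact hp'S x (((Walk.mem_support_append_iff _ _).1 hx).resolve_left hxp)

theorem exists_isCompOf_of_mem (T : SimpleGraph W) {s : Set W} {t : W} (ht : t ∈ s) :
    ∃ C, IsCompOf T s C ∧ t ∈ C := by
  let K := (T.induce s).connectedComponentMk ⟨t, ht⟩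
  refine ⟨Subtype.val '' K.supp, ⟨⟨t, ⟨t, ht⟩, rfl, rfl⟩, ?_, ?_, ?_⟩, ⟨t, ht⟩, rfl, rfl⟩
  · rintro - ⟨y, -, rfl⟩
    exact y.2
  · let f : K.toSimpleGraph →g T.induce (Subtype.val '' K.supp) :=
      ⟨fun y ↦ ⟨y.1.1, Set.mem_image_of_mem _ y.2⟩, fun h ↦ h⟩
    have hf : Function.Surjective f := by
      rintro ⟨-, y, hy, rfl⟩
      exact ⟨⟨y, hy⟩, rfl⟩
    exact K.connected_toSimpleGraph.map f hf
  · rintro - d ⟨c, hc, rfl⟩ hd hcd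
    exact ⟨⟨d, hd⟩, (K.mem_supp_congr_adj (induce_adj.2 hcd)).1 hc, rfl⟩

namespace IsCompOf

variable {s C : Set W} {z : W} {q : T.Walk x z}

theorem mem_of_adj_of_mem_support (hC : IsCompOf T (s \ {y | y ∈ q.support}) C)
    (hT : T.IsAcyclic) (hq : q.IsPath) (hS : (T.induce S).Preconnected) (hx : x ∈ S)
    (hSC : (S ∩ C).Nonempty) {c d : W} (hc : c ∈ C) (hd : d ∈ q.support) (hcd : T.Adj c d) :
    d ∈ S := by
  classical
  obtain ⟨t, ht, htC⟩ := hSC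
  obtain ⟨p, hp, hpC⟩ := exists_isPath_of_preconnected_induce hC.2.2.1.preconnected hc htC
  have hdisj : ∀ y ∈ p.support, y ∉ q.support := fun y hy ↦ (hC.2.1 (hpC y hy)).2
  have hpath : ((q.takeUntil d hd).append (.cons hcd.symm p)).IsPath := by
    rw [Walk.isPath_def, Walk.support_append, Walk.support_cons, List.tail_cons]
    exact (hq.takeUntil hd).support_nodup.append hp.support_nodup
      fun y hy hy' ↦ hdisj y hy' (q.support_takeUntil_subset_support hd hy)
  exact mem_of_mem_support_of_preconnected_induce hT hS hx ht hpath
    ((Walk.mem_support_append_iff _ _).2 (.inl (Walk.end_mem_support _)))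

/-- A subtree leaving `C` does so through the vertex of `q` to which `C` is attached, or else
through `x`; both lie in every subtree that joins `x` to `C`. -/
theorem exists_mem_inter_support (hC : IsCompOf T (rootedSubtree T r x \ {y | y ∈ q.support}) C)
    (hT : T.IsAcyclic) (hq : q.IsPath) {B : Set W} (hB : (T.induce B).Preconnected)
    (hxB : x ∈ B) (hBC : (B ∩ C).Nonempty) (hS : (T.induce S).Preconnected)
    (hSC : (S ∩ C).Nonempty) (hSC' : ¬ S ⊆ C) :
    ∃ y ∈ q.support, y ∈ B ∧ y ∈ S := by
  obtain ⟨c, ⟨hcS, hcC⟩, d, ⟨hdS, hdC⟩, hcd⟩ := exists_adj_of_preconnected_induce hS hSC hSC'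
  by_cases hdX : d ∈ rootedSubtree T r x
  · have hdq : d ∈ q.support := by
      by_contra hdq
      exact hdC (hC.2.2.2 hcC ⟨hdX, hdq⟩ hcd)
    exact ⟨d, hdq, hC.mem_of_adj_of_mem_support hT hq hB hxB hBC hcC hdq hcd, hdS⟩
  · exact ⟨x, q.start_mem_support, hxB,
      mem_of_not_subset_rootedSubtree hS ⟨c, hcS, (hC.2.1 hcC).1⟩ fun h ↦ hdX (h hdS)⟩

end IsCompOf

end Components

namespace TreeRep

variable {V W : Type} {G : SimpleGraph V} {T : SimpleGraph W} (R : TreeRep G T)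

theorem adj_of_mem {u v : V} {t : W} (huv : u ≠ v) (hu : t ∈ R.S u) (hv : t ∈ R.S v) :
    G.Adj u v :=
  (R.adj_iff u v huv).2 ⟨t, hu, hv⟩

theorem inter_nonempty_of_adj {u v : V} (huv : G.Adj u v) : (R.S u ∩ R.S v).Nonempty :=
  (R.adj_iff u v huv.ne).1 huv

theorem preconnected_induce (v : V) : (T.induce (R.S v)).Preconnected :=
  (R.subtree_connected v).preconnected

/-- The vertices of `G` whose subtrees lie entirely in the set `s` of host vertices. -/
def inside (s : Set W) : Set V :=
  {v | R.S v ⊆ s}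

/-- Among the vertices in the bag of `x`, the subtree of `w` reaches furthest along the walk `q`
starting at `x`. -/
structure ReachesFurthest {x z : W} (q : T.Walk x z) (w : V) : Prop where
  mem_bag : w ∈ R.bag x
  mem_of_mem : ∀ v ∈ R.bag x, ∀ y ∈ q.support, y ∈ R.S v → y ∈ R.S w

/-- A segment `E` of the walk `P` that starts in the bag of `x`, ends at a neighbour of `w`, and in
between only visits vertices whose subtrees lie in `C`. -/
structure IsEar_s11 (x : W) (w : V) (C : Set W) {a b c d : V} (P : G.Walk a b) (E : G.Walk c d) :
    Prop where
  isSubwalk : E.IsSubwalk P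
  ne : c ≠ d
  start_mem_bag : c ∈ R.bag x
  adj_end : G.Adj w d
  mem_inside : ∀ v ∈ E.support, v = c ∨ v = d ∨ v ∈ R.inside C

variable {R}

theorem exists_reachesFurthest {x z : W} {q : T.Walk x z} (hq : q.IsPath)
    (hne : (R.bag x).Nonempty) : ∃ w, R.ReachesFurthest q w := by
  let f : V → Set W := fun v ↦ {y | y ∈ q.support} ∩ R.S v
  have hfin : (f '' R.bag x).Finite :=
    q.support.finite_toSet.finite_subsets.subset
      (Set.image_subset_iff.2 fun _ _ ↦ Set.inter_subset_left)
  obtain ⟨w, hw⟩ := Set.Finite.exists_maximalFor' f _ hfin hne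
  refine ⟨w, hw.prop, fun v hv y hyq hyv ↦ ?_⟩
  rcases inter_support_subset_total R.isTree.isAcyclic (R.preconnected_induce v)
    (R.preconnected_induce w) hv hw.prop hq with hvw | hwv
  · exact hvw ⟨hyq, hyv⟩
  · exact (hw.2 hv (Set.subset_inter Set.inter_subset_left hwv) ⟨hyq, hyv⟩).2

section Core

variable {a b w : V} {P : G.Walk a b}

theorem disjoint_core_of_notMem_support (hP : IsLongestPath G P) (hw : w ∉ P.support) :
    Disjoint (R.core P.toSubgraph) (R.S w) := by
  rw [Set.disjoint_left]
  rintro t ⟨u, v, huv, htu, htv⟩ htw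
  have hwu : w ≠ u := fun h ↦ hw (h ▸ Walk.mem_support_of_adj_toSubgraph huv)
  have hwv : w ≠ v := fun h ↦ hw (h ▸ Walk.mem_support_of_adj_toSubgraph huv.symm)
  exact hP.not_adj_of_adj hw huv (R.adj_of_mem hwu htw htu) (R.adj_of_mem hwv htw htv)

theorem core_inter_nonempty_of_mem_inside (hP : ¬ P.Nil) {C : Set W} {v : V}
    (hv : v ∈ P.support) (hvC : v ∈ R.inside C) : (R.core P.toSubgraph ∩ C).Nonempty := by
  obtain ⟨e, he, hve⟩ := (Walk.mem_support_iff_exists_mem_edges_of_not_nil hP).1 hv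
  obtain ⟨u, rfl⟩ := Sym2.mem_iff_exists.1 hve
  obtain ⟨t, htv, htu⟩ := R.inter_nonempty_of_adj (P.adj_of_mem_edges he)
  exact ⟨t, ⟨v, u, Walk.adj_toSubgraph_iff_mem_edges.2 he, htv, htu⟩, hvC htv⟩

end Core

section RootedSubtree

variable {r x : W} {a b : V} {P : G.Walk a b}

theorem mem_inside_or_mem_bag {v : V} (hv : (R.S v ∩ rootedSubtree T r x).Nonempty) :
    v ∈ R.inside (rootedSubtree T r x \ {x}) ∨ v ∈ R.bag x := by
  refine or_iff_not_imp_right.2 fun hx ↦ Set.subset_sdiff_singleton ?_ hx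
  by_contra hleave
  exact hx (mem_of_not_subset_rootedSubtree (S := R.S v) (R.preconnected_induce v) hv hleave)

theorem exists_mem_support_mem_inside
    (hcap : (R.core P.toSubgraph ∩ rootedSubtree T r x).Nonempty)
    (hx : x ∉ R.core P.toSubgraph) :
    ∃ u ∈ P.support, u ∈ R.inside (rootedSubtree T r x \ {x}) := by
  obtain ⟨t, ⟨u, v, huv, htu, htv⟩, htX⟩ := hcap
  rcases mem_inside_or_mem_bag ⟨t, htu, htX⟩ with hu | hu
  · exact ⟨u, Walk.mem_support_of_adj_toSubgraph huv, hu⟩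
  rcases mem_inside_or_mem_bag ⟨t, htv, htX⟩ with hv | hv
  · exact ⟨v, Walk.mem_support_of_adj_toSubgraph huv.symm, hv⟩
  exact absurd ⟨u, v, huv, hu, hv⟩ hx

theorem exists_eq_append_cons_of_entry (ha : ¬ R.S a ⊆ rootedSubtree T r x) {u : V}
    (hu : u ∈ P.support) (huX : u ∈ R.inside (rootedSubtree T r x \ {x})) :
    ∃ (c d : V) (α : G.Walk a c) (h : G.Adj c d) (β : G.Walk d b), P = α.append (.cons h β) ∧
      c ∈ R.bag x ∧ d ∈ R.inside (rootedSubtree T r x \ {x}) := by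
  obtain ⟨P₁, P₂, rfl⟩ := Walk.mem_support_iff_exists_append.1 hu
  obtain ⟨c, d, α, h, β, rfl, hα, hd⟩ :=
    exists_eq_append_cons_of_exit P₁ (S := (R.inside (rootedSubtree T r x \ {x}))ᶜ)
      (fun haX ↦ ha (haX.trans Set.sdiff_subset)) (not_not.2 huX)
  rw [Set.notMem_compl_iff] at hd
  refine ⟨c, d, α, h, β.append P₂, (Walk.append_assoc ..).symm, ?_, hd⟩
  obtain ⟨t, htc, htd⟩ := R.inter_nonempty_of_adj h
  exact (mem_inside_or_mem_bag ⟨t, htc, (hd htd).1⟩).resolve_left (hα c α.end_mem_support)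

theorem bag_nonempty_of_core_inter_nonempty (ha : ¬ R.S a ⊆ rootedSubtree T r x)
    (hcap : (R.core P.toSubgraph ∩ rootedSubtree T r x).Nonempty) : (R.bag x).Nonempty := by
  by_cases hx : x ∈ R.core P.toSubgraph
  · obtain ⟨u, -, -, hu, -⟩ := hx
    exact ⟨u, hu⟩
  · obtain ⟨u, hu, huX⟩ := exists_mem_support_mem_inside hcap hx
    obtain ⟨c, -, -, -, -, -, hc, -⟩ := exists_eq_append_cons_of_entry ha hu huX
    exact ⟨c, hc⟩

variable {z : W} {q : T.Walk x z} {w : V}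

theorem ReachesFurthest.exists_mem_of_notMem_inside (hw : R.ReachesFurthest q w) (hq : q.IsPath)
    {C : Set W} (hC : IsCompOf T (rootedSubtree T r x \ {y | y ∈ q.support}) C) {u v : V}
    (hu : u ∈ R.bag x) (huC : (R.S u ∩ C).Nonempty) (hvC : (R.S v ∩ C).Nonempty)
    (hv : v ∉ R.inside C) : ∃ y ∈ R.S w, y ∈ R.S u ∧ y ∈ R.S v := by
  obtain ⟨y, hyq, hyu, hyv⟩ := hC.exists_mem_inter_support R.isTree.isAcyclic hq
    (R.preconnected_induce u) hu huC (R.preconnected_induce v) hvC hv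
  exact ⟨y, hw.mem_of_mem u hu y hyq hyu, hyu, hyv⟩

theorem ReachesFurthest.exists_isCompOf (hw : R.ReachesFurthest q w) (hq : q.IsPath)
    (hdisj : Disjoint (R.core P.toSubgraph) (R.S w)) {c d : V} (hcd : P.toSubgraph.Adj c d)
    (hc : c ∈ R.bag x) (hd : d ∈ R.inside (rootedSubtree T r x \ {x})) :
    ∃ C, IsCompOf T (rootedSubtree T r x \ {y | y ∈ q.support}) C ∧
      (R.S c ∩ C).Nonempty ∧ d ∈ R.inside C := by
  have hcdw : ∀ t, t ∈ R.S c → t ∈ R.S d → t ∉ R.S w := fun t htc htd ↦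
    Set.disjoint_left.1 hdisj ⟨c, d, hcd, htc, htd⟩
  obtain ⟨t, htc, htd⟩ := R.inter_nonempty_of_adj hcd.adj_sub
  have htq : t ∉ q.support := fun h ↦ hcdw t htc htd (hw.mem_of_mem c hc t h htc)
  obtain ⟨C, hC, htC⟩ := exists_isCompOf_of_mem T
    (show t ∈ rootedSubtree T r x \ {y | y ∈ q.support} from ⟨(hd htd).1, htq⟩)
  refine ⟨C, hC, ⟨t, htc, htC⟩, ?_⟩
  by_contra hdC
  obtain ⟨y, hyw, hyc, hyd⟩ :=
    hw.exists_mem_of_notMem_inside hq hC hc ⟨t, htc, htC⟩ ⟨t, htd, htC⟩ hdC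
  exact hcdw y hyc hyd hyw

theorem ReachesFurthest.exists_isEar (hw : R.ReachesFurthest q w) (hq : q.IsPath)
    (hP : IsLongestPath G P) (hwP : w ∉ P.support)
    (hcap : (R.core P.toSubgraph ∩ rootedSubtree T r x).Nonempty)
    (ha : ¬ R.S a ⊆ rootedSubtree T r x) (hb : ¬ R.S b ⊆ rootedSubtree T r x) :
    ∃ C, IsCompOf T (rootedSubtree T r x \ {y | y ∈ q.support}) C ∧
      ∃ (c d : V) (E : G.Walk c d), R.IsEar_s11 x w C P E := by
  have hdisj : Disjoint (R.core P.toSubgraph) (R.S w) := disjoint_core_of_notMem_support hP hwP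
  obtain ⟨u, hu, huX⟩ :=
    exists_mem_support_mem_inside hcap fun hx ↦ Set.disjoint_left.1 hdisj hx hw.mem_bag
  obtain ⟨c, c', α, hcc', β, rfl, hc, hc'⟩ := exists_eq_append_cons_of_entry ha hu huX
  obtain ⟨C, hC, hcC, hc'C⟩ := hw.exists_isCompOf hq hdisj (by simp) hc hc'
  obtain ⟨d', d, σ, hd'd, τ, rfl, hσ, hd⟩ := exists_eq_append_cons_of_exit β hc'C
    fun hbC ↦ hb (hbC.trans (hC.2.1.trans Set.sdiff_subset))
  have hE : (Walk.cons hcc' (σ.concat hd'd)).IsSubwalk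
      (α.append (.cons hcc' (σ.append (.cons hd'd τ)))) :=
    ⟨α, τ, by simp [Walk.concat_eq_append, ← Walk.append_assoc]⟩
  refine ⟨C, hC, c, d, _, hE, ?_, hc, ?_, ?_⟩
  · intro hcd
    simpa using (Walk.isPath_of_isSubwalk hE hP.1).nil_iff_eq.2 hcd
  · obtain ⟨t, htd', htd⟩ := R.inter_nonempty_of_adj hd'd
    obtain ⟨y, hyw, -, hyd⟩ := hw.exists_mem_of_notMem_inside hq hC hc hcC
      ⟨t, htd, hσ d' σ.end_mem_support htd'⟩ hd
    refine R.adj_of_mem (fun h ↦ hwP ?_) hyw hyd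
    simp [h]
  · intro v hv
    simp only [Walk.support_cons, Walk.support_concat, List.mem_cons, List.mem_append] at hv
    grind

end RootedSubtree

namespace IsEar_s11

variable {x : W} {w : V} {C : Set W} {a b c d : V} {P : G.Walk a b} {E : G.Walk c d}

theorem not_nil (hE : R.IsEar_s11 x w C P E) : ¬ P.Nil := by
  have hlen := Walk.length_le_of_isSubwalk hE.isSubwalk
  have hE : 0 < E.length := Walk.not_nil_iff_lt_length.1 (Walk.not_nil_of_ne hE.ne)
  exact Walk.not_nil_iff_lt_length.2 (hE.trans_le hlen)

/-- Otherwise replacing `E` in `P` by `c, c', …, d', w, d`, where `E'` runs from `c'` to `d'`,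
would give a longer path. -/
theorem core_inter_nonempty {C' : Set W} {a' b' c' d' : V} {P' : G.Walk a' b'} {E' : G.Walk c' d'}
    (hE : R.IsEar_s11 x w C P E) (hE' : R.IsEar_s11 x w C' P' E') (hP : IsLongestPath G P)
    (hP' : P'.IsPath) (hw : w ∉ P.support) (hw' : w ∉ P'.support) (hc' : c' ∉ P.support)
    (hd' : d' ∉ P.support) (hlen : E.length ≤ E'.length) :
    (R.core P.toSubgraph ∩ C').Nonempty := by
  by_contra hcore
  have hdisj : ∀ v ∈ E'.support, v ∉ P.support := by
    rintro v hv hvP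
    rcases hE'.mem_inside v hv with rfl | rfl | hvC'
    · exact hc' hvP
    · exact hd' hvP
    · exact hcore (core_inter_nonempty_of_mem_inside hE.not_nil hvP hvC')
  have hcP : c ∈ P.support := hE.isSubwalk.support_subset E.start_mem_support
  have hdP : d ∈ P.support := hE.isSubwalk.support_subset E.end_mem_support
  have hcc' : G.Adj c c' :=
    R.adj_of_mem (fun h ↦ hc' (h ▸ hcP)) hE.start_mem_bag hE'.start_mem_bag
  have hwE' : w ∉ E'.support := fun h ↦ hw' (hE'.isSubwalk.support_subset h)
  let D : G.Walk c d := .cons hcc' ((E'.concat hE'.adj_end.symm).concat hE.adj_end)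
  have hD : D.IsPath := by
    refine (((Walk.isPath_of_isSubwalk hE'.isSubwalk hP').concat hwE' _).concat ?_ _).cons ?_
    · simpa [Walk.support_concat, hE.adj_end.ne'] using fun h ↦ hdisj d h hdP
    · simp only [Walk.support_concat, List.mem_append, List.mem_singleton]
      rintro ((h | rfl) | h)
      exacts [hdisj c h hcP, hw hcP, hE.ne h]
  have hDP : ∀ y ∈ D.support, y ∈ P.support → y = c ∨ y = d := by
    simp only [D, Walk.support_cons, Walk.support_concat, List.mem_cons, List.mem_append]
    grind
  have hDE := hP.length_le_of_isSubwalk hE.isSubwalk hD hDP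
  simp only [D, Walk.length_cons, Walk.length_concat] at hDE
  omega

end IsEar_s11

end TreeRep

theorem roundpath_general {V W : Type} {G : SimpleGraph V} {T : SimpleGraph W} (R : TreeRep G T)
    (r : W) {x z : W} {q : T.Walk x z} (hq : q.IsPath) {ι : Type*} (a b : ι → V)
    (P : ∀ i : ι, G.Walk (a i) (b i)) (hP : ∀ i, IsLongestPath G (P i))
    (hcap : ∀ i, (R.core (P i).toSubgraph ∩ rootedSubtree T r x).Nonempty)
    (ha : ∀ i, ¬ R.S (a i) ⊆ rootedSubtree T r x) (hb : ∀ i, ¬ R.S (b i) ⊆ rootedSubtree T r x) :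
    ∃ A : Set V, A.Finite ∧ A.ncard ≤ 3 ∧
      ((∀ i, ∃ v ∈ A, v ∈ (P i).support) ∨
        ∃ X', IsCompOf T (rootedSubtree T r x \ {y | y ∈ q.support}) X' ∧
          ∀ i, (∀ v ∈ A, v ∉ (P i).support) → (R.core (P i).toSubgraph ∩ X').Nonempty) := by
  rcases isEmpty_or_nonempty ι with hι | ⟨⟨i₀⟩⟩
  · exact ⟨∅, Set.finite_empty, by simp, .inl hι.elim⟩
  obtain ⟨w, hw⟩ := TreeRep.exists_reachesFurthest hq
    (TreeRep.bag_nonempty_of_core_inter_nonempty (ha i₀) (hcap i₀))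
  by_cases! hall : ∀ i, w ∈ (P i).support
  · exact ⟨{w}, Set.finite_singleton w, by simp, .inl fun i ↦ ⟨w, rfl, hall i⟩⟩
  choose C hC c d E hE using fun i : {i // w ∉ (P i).support} ↦
    hw.exists_isEar hq (hP i) i.2 (hcap i) (ha i) (hb i)
  have hbdd : BddAbove (Set.range fun i ↦ (E i).length) :=
    ⟨(P i₀).length, by
      rintro - ⟨i, rfl⟩
      exact (Walk.length_le_of_isSubwalk (hE i).isSubwalk).trans ((hP i₀).2 _ _ _ (hP i).1)⟩
  have : Nonempty {i // w ∉ (P i).support} := nonempty_subtype.2 hall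
  obtain ⟨-, ⟨j, rfl⟩, hj⟩ := hbdd.exists_isGreatest_of_nonempty (Set.range_nonempty _)
  refine ⟨{w, c j, d j}, Set.toFinite _, ?_, .inr ⟨C j, hC j, fun i hi ↦ ?_⟩⟩
  · have hcard_pair := Set.ncard_insert_le (c j) {d j}
    have hcard := Set.ncard_insert_le w {c j, d j}
    rw [Set.ncard_singleton] at hcard_pair
    omega
  have hwi : w ∉ (P i).support := hi w (by simp)
  exact (hE ⟨i, hwi⟩).core_inter_nonempty (hE j) (hP i) (hP j).1 hwi j.2
    (hi (c j) (by simp)) (hi (d j) (by simp)) (hj ⟨⟨i, hwi⟩, rfl⟩)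

/-- For a connected chordal `G` with minimal rooted tree representation,
a subtree `X` rooted at `x`, the `x`–`z` path `Q = q` in `X`, and a family `𝒫 = P` of
longest paths with the core capture property for `X` whose endpoints' subtrees all leave
`X`, there is `A ⊆ V(G)` with `|A| ≤ 4` such that the paths of `𝒫` disjoint from `A`
either form an empty family, or some component `X'` of `X − V(Q)` has the core capture
property for them. -/
theorem roundpath {V W : Type} [Fintype V] [Fintype W] (G : SimpleGraph V)
    (T : SimpleGraph W) (hconn : G.Connected) (hchordal : IsChordal G)
    (R : TreeRep G T) (hmin : R.IsMinimal) (r : W)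
    (x z : W) (hz : z ∈ rootedSubtree T r x)
    (q : T.Walk x z) (hq : q.IsPath) (hqX : ∀ w ∈ q.support, w ∈ rootedSubtree T r x)
    {ι : Type} (a b : ι → V) (P : ∀ i : ι, G.Walk (a i) (b i))
    (hP : ∀ i : ι, IsLongestPath G (P i))
    (hcap : ∀ i : ι, (R.core (P i).toSubgraph ∩ rootedSubtree T r x).Nonempty)
    (hends : ∀ i : ι, (∃ t ∈ R.S (a i), t ∉ rootedSubtree T r x) ∧
      (∃ t ∈ R.S (b i), t ∉ rootedSubtree T r x)) :
    ∃ A : Set V, A.Finite ∧ A.ncard ≤ 4 ∧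
      ((∀ i : ι, ∃ v ∈ A, v ∈ (P i).support) ∨
        ∃ X' : Set W, IsCompOf T (rootedSubtree T r x \ {w : W | w ∈ q.support}) X' ∧
          ∀ i : ι, (∀ v ∈ A, v ∉ (P i).support) →
            (R.core (P i).toSubgraph ∩ X').Nonempty) := by
  obtain ⟨A, hfin, hcard, hA⟩ := roundpath_general R r hq a b P hP hcap
    (fun i ↦ Set.not_subset.2 (hends i).1) (fun i ↦ Set.not_subset.2 (hends i).2)
  exact ⟨A, hfin, by omega, hA⟩
end

section
/- Let G be a connected graph, let w ∈ V(G), and let 𝒫 be a family of longest paths of G, each avoiding w. Call a vertex u an attachment point if u ∈ N(w). Let ℛ be a nonempty family of paths in G such that each R ∈ ℛ avoids w and has at least one endpoint that is an attachment point. If every path P ∈ 𝒫 contains a suffix (a subpath of P containing an endpoint of P) belonging to ℛ, then every maximum-length path in ℛ intersects every path in 𝒫. -/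
open SimpleGraph

/-!
Suppose a longest path `p` from `a` to `b` misses a maximum-length member `r` of `ℛ`. Let `s` be
the suffix of `p` in `ℛ`, say containing `a`, and let `u` be its endpoint adjacent to `w`. Replacing
the part of `p` between `a` and `u` by the detour through `w` into `r` gives a path. That part
lies in `s`, hence is no longer than `r`, whereas the detour has length `r.length + 2`; so the new
path is longer than `p`.
-/

section Walk

variable {V : Type*} {G : SimpleGraph V} {a b c d u v : V}

lemma isPath_append_cons {p : G.Walk a b} {q : G.Walk c d} (hp : p.IsPath) (hq : q.IsPath)
    (hbc : G.Adj b c) (hdisj : p.support.Disjoint q.support) :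
    (p.append (.cons hbc q)).IsPath := by
  rw [Walk.isPath_def, Walk.support_append, Walk.support_cons, List.tail_cons]
  exact hp.support_nodup.append hq.support_nodup hdisj

lemma edges_subset_edges_of_toSubgraph_le {p : G.Walk a b} {q : G.Walk c d}
    (h : q.toSubgraph ≤ p.toSubgraph) : q.edges ⊆ p.edges := fun _ he ↦
  p.mem_edges_toSubgraph.mp (Subgraph.edgeSet_mono h (q.mem_edges_toSubgraph.mpr he))

variable [DecidableEq V]

lemma idxOf_support_getVert {p : G.Walk a b} (hp : p.IsPath) {n : ℕ} (hn : n ≤ p.length) :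
    p.support.idxOf (p.getVert n) = n := by
  rw [p.getVert_eq_support_getElem hn]
  exact hp.support_nodup.idxOf_getElem n _

lemma idxOf_support_le_of_mem_edges {p : G.Walk a b} (hp : p.IsPath) (h : s(u, v) ∈ p.edges) :
    p.support.idxOf u ≤ p.support.idxOf v + 1 := by
  obtain ⟨n, hn, heq⟩ := p.mk_mem_edges_iff_exists.mp h
  have hidx := idxOf_support_getVert hp hn.le
  have hidx_succ := idxOf_support_getVert hp (n := n + 1) hn
  rcases Sym2.eq_iff.mp heq with ⟨rfl, rfl⟩ | ⟨rfl, rfl⟩ <;> omega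

lemma idxOf_support_le_add_length {p : G.Walk a b} (hp : p.IsPath) (q : G.Walk u v)
    (hq : q.edges ⊆ p.edges) : p.support.idxOf u ≤ p.support.idxOf v + q.length := by
  induction q with
  | nil => simp
  | cons _ q ih =>
    rw [Walk.edges_cons, List.cons_subset] at hq
    have hstep := idxOf_support_le_of_mem_edges hp hq.1
    have htail := ih hq.2
    rw [Walk.length_cons]
    omega

lemma length_takeUntil_le_of_edges_subset {p : G.Walk a b} (hp : p.IsPath) (hu : u ∈ p.support)
    {q : G.Walk u v} (hq : q.edges ⊆ p.edges) (ha : a ∈ q.support) :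
    (p.takeUntil u hu).length ≤ q.length :=
  calc (p.takeUntil u hu).length
    _ = p.support.idxOf u := p.length_takeUntil hu
    _ ≤ p.support.idxOf a + (q.takeUntil a ha).length :=
        idxOf_support_le_add_length hp _
          (List.Subset.trans (q.edges_takeUntil_subset_edges ha) hq)
    _ = (q.takeUntil a ha).length := by
        rw [← p.length_takeUntil p.start_mem_support, Walk.takeUntil_first, Walk.length_nil,
          zero_add]
    _ ≤ q.length := q.length_takeUntil_le_length ha

end Walk

section LongestPath

variable {V : Type} {G : SimpleGraph V} {a b c d u v w : V} {p : G.Walk a b}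

lemma IsLongestPath.reverse (hp : IsLongestPath G p) : IsLongestPath G p.reverse :=
  ⟨hp.1.reverse, by simpa only [Walk.length_reverse] using hp.2⟩

lemma IsLongestPath.length_lt_length_takeUntil [DecidableEq V] (hp : IsLongestPath G p)
    (hu : u ∈ p.support) (huc : G.Adj u c) {q : G.Walk c d} (hq : q.IsPath)
    (hdisj : p.support.Disjoint q.support) : q.length < (p.takeUntil u hu).length := by
  have hpath : ((p.dropUntil u hu).reverse.append (.cons huc q)).IsPath := by
    refine isPath_append_cons (hp.1.dropUntil hu).reverse hq huc fun x hx ↦ hdisj ?_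
    rw [Walk.support_reverse, List.mem_reverse] at hx
    exact p.support_dropUntil_subset_support hu hx
  have hle := hp.2 _ _ _ hpath
  have hsplit := congrArg Walk.length (p.take_spec hu)
  simp only [Walk.length_append, Walk.length_reverse, Walk.length_cons] at hle hsplit
  omega

lemma IsLongestPath.exists_mem_support_of_adj_start (hp : IsLongestPath G p) (hwp : w ∉ p.support)
    {s : G.Walk u v} (hsp : s.toSubgraph ≤ p.toSubgraph) (ha : a ∈ s.support) (hwu : G.Adj w u)
    {r : G.Walk c d} (hr : r.IsPath) (hwr : w ∉ r.support) (hwc : G.Adj w c)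
    (hlen : s.length ≤ r.length + 1) : ∃ x, x ∈ r.support ∧ x ∈ p.support := by
  classical
  by_contra! hdisj
  have hu : u ∈ p.support :=
    p.mem_verts_toSubgraph.mp (hsp.1 (s.mem_verts_toSubgraph.mpr s.start_mem_support))
  have hwr_disj : p.support.Disjoint (Walk.cons hwc r).support := by
    rw [Walk.support_cons, List.disjoint_cons_right]
    exact ⟨hwp, fun x hxp hxr ↦ hdisj x hxr hxp⟩
  have hlt := hp.length_lt_length_takeUntil hu hwu.symm (hr.cons hwr) hwr_disj
  have hle := length_takeUntil_le_of_edges_subset hp.1 hu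
    (edges_subset_edges_of_toSubgraph_le hsp) ha
  rw [Walk.length_cons] at hlt
  omega

theorem one_way_general (hp : IsLongestPath G p) (hwp : w ∉ p.support)
    {s : G.Walk u v} (hsp : s.toSubgraph ≤ p.toSubgraph) (hab : a ∈ s.support ∨ b ∈ s.support)
    (hwuv : G.Adj w u ∨ G.Adj w v)
    {r : G.Walk c d} (hr : r.IsPath) (hwr : w ∉ r.support) (hwcd : G.Adj w c ∨ G.Adj w d)
    (hlen : s.length ≤ r.length + 1) : ∃ x, x ∈ r.support ∧ x ∈ p.support := by
  wlog ha : a ∈ s.support generalizing a b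
  · simpa using this hp.reverse (by simpa using hwp) (by simpa using hsp) hab.symm
      (hab.resolve_left ha)
  wlog hwu : G.Adj w u generalizing u v
  · exact this (s := s.reverse) hwuv.symm (by simpa using hlen) (by simpa using hsp)
      (by simpa using hab) (by simpa using ha) (hwuv.resolve_left hwu)
  wlog hwc : G.Adj w c generalizing c d
  · simpa using this hr.reverse (by simpa using hwr) hwcd.symm (by simpa using hlen)
      (hwcd.resolve_left hwc)
  exact hp.exists_mem_support_of_adj_start hwp hsp ha hwu hr hwr hwc hlen

end LongestPath

/-- Let `G` be connected, `w` a glue vertex, and `𝒫 = P` a family of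
longest paths avoiding `w`. Let `ℛ` be a nonempty family of paths avoiding `w`, each with
at least one endpoint adjacent to `w`. If every path of `𝒫` contains a suffix belonging
to `ℛ`, then every maximum-length path of `ℛ` intersects every path of `𝒫`. -/
theorem one_way {V : Type} (G : SimpleGraph V) (hconn : G.Connected) (w : V)
    {ι : Type} (Pa Pb : ι → V) (P : ∀ i : ι, G.Walk (Pa i) (Pb i))
    (hP : ∀ i : ι, IsLongestPath G (P i)) (hPw : ∀ i : ι, w ∉ (P i).support)
    {ρ : Type} [Nonempty ρ] (Ra Rb : ρ → V) (Rw : ∀ j : ρ, G.Walk (Ra j) (Rb j))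
    (hRpath : ∀ j : ρ, (Rw j).IsPath) (hRw : ∀ j : ρ, w ∉ (Rw j).support)
    (hatt : ∀ j : ρ, G.Adj w (Ra j) ∨ G.Adj w (Rb j))
    (hsuffix : ∀ i : ι, ∃ j : ρ, (Rw j).toSubgraph ≤ (P i).toSubgraph ∧
      (Pa i ∈ (Rw j).support ∨ Pb i ∈ (Rw j).support)) :
    ∀ j : ρ, (∀ j' : ρ, (Rw j').length ≤ (Rw j).length) →
      ∀ i : ι, ∃ v : V, v ∈ (Rw j).support ∧ v ∈ (P i).support := by
  intro j hmax i
  obtain ⟨k, hsub, hend⟩ := hsuffix i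
  exact one_way_general (hP i) (hPw i) hsub hend (hatt k) (hRpath j) (hRw j) (hatt j)
    (Nat.le_succ_of_le (hmax k))
end
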